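/- Let G be a finitely generated virtually free group and H a finitely generated subgroup. Then for any g ∈ G not conjugate into H, there exists a finite quotient q : G → Q such that q(g) is not conjugate into q(H); that is, finitely generated subgroups of finitely generated virtually free groups are conjugacy distinguished. -/

import Mathlib

/-!
It suffices to find a subgroup of finite index that contains `H` but no conjugate of `g`.

Suppose that `g` has infinite order. Some power of `g` lies in a free normal subgroup of finite
index and is conjugate there to a cyclically reduced word. A finite permutation representation
that extends the core of the Schreier graph of `H` (Marshall Hall) has superfluous edges. Replace
each of them by a Cayley graph of a finite group, cut open along that edge: if the finite group
separates short words, a short cyclically reduced word can only fix points of the core.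

Suppose that `g` has finite order. Among the cuts of the Cayley graph of least size that separate
ends, those crossing the fewest others are nested, so `G` acts on the dual tree; there torsion fixes
vertices and the free subgroup acts freely. Passing to the preimage of the cyclic group generated by
the image of `g`, one attaches to the vertices of the tree finite sets of colours, equivariantly,
and identifies the sets of adjacent vertices. As the tree is simply connected, the parallel sections
form a finite `G`-set. It has a point fixed by `H`, whereas a conjugate of `g` fixes a colour over a
vertex that it fixes only if it fixes a coset of `H`.
-/

universe u

open FreeGroup (of mk)

section PartialActions

/-- `ι` respects the edges `y — s • y` of the Schreier graph of `Y` both of whose ends lie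
in `Y₀`; the letters `s` range over the basis of the free group. -/
def EquivariantWithin (α : Type*) {X Y : Type*} [MulAction (FreeGroup α) X]
    [MulAction (FreeGroup α) Y] (Y₀ : Set Y) (ι : Y → X) : Prop :=
  ∀ (s : α) (y : Y), y ∈ Y₀ → of s • y ∈ Y₀ → ι (of s • y) = of s • ι y

variable {α : Type*} {X Y : Type*} [MulAction (FreeGroup α) X] [MulAction (FreeGroup α) Y]

theorem mk_cons_smul (ℓ : α × Bool) (w : List (α × Bool)) (y : Y) :
    mk (ℓ :: w) • y = mk [ℓ] • mk w • y := by
  rw [smul_smul, FreeGroup.mul_mk, List.singleton_append]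

theorem mk_append_smul (v w : List (α × Bool)) (y : Y) :
    mk (v ++ w) • y = mk v • mk w • y := by
  rw [smul_smul, FreeGroup.mul_mk]

theorem mk_singleton_true (s : α) : mk [(s, true)] = of s := rfl

theorem mk_singleton_false (s : α) : mk [(s, false)] = (of s)⁻¹ := by
  simp [of, FreeGroup.inv_mk, FreeGroup.invRev]

theorem EquivariantWithin.map_mk_smul {Y₀ : Set Y} {ι : Y → X} (hι : EquivariantWithin α Y₀ ι)
    {y : Y} {w : List (α × Bool)} (hw : ∀ v, v <:+ w → mk v • y ∈ Y₀) :
    ι (mk w • y) = mk w • ι y := by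
  induction w with
  | nil => simp [← FreeGroup.one_eq_mk]
  | cons ℓ w ih =>
    have hw₁ : mk w • y ∈ Y₀ := hw w (List.suffix_cons ℓ w)
    have hw₂ := hw (ℓ :: w) List.suffix_rfl
    rw [mk_cons_smul] at hw₂
    rw [mk_cons_smul, mk_cons_smul ℓ w (ι y),
      ← ih fun v hv ↦ hw v (hv.trans (List.suffix_cons ℓ w))]
    obtain ⟨s, _ | _⟩ := ℓ
    · rw [mk_singleton_false] at hw₂ ⊢
      rw [eq_inv_smul_iff, ← hι s _ hw₂ (by rwa [smul_inv_smul]), smul_inv_smul]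
    · exact hι s _ hw₁ hw₂

end PartialActions

section Words

variable {α : Type*} [DecidableEq α]

/-- The suffixes of words representing elements of `S`. Letters act from the left, so these are
the initial segments of the paths traced out by the elements of `S` in a Schreier graph. -/
def pathWords (S : Set (FreeGroup α)) : Set (List (α × Bool)) :=
  {v | ∃ x ∈ S, v <:+ x.toWord}

theorem pathWords_finite {S : Set (FreeGroup α)} (hS : S.Finite) : (pathWords S).Finite := by
  have : pathWords S = ⋃ x ∈ S, {v | v <:+ x.toWord} := by ext; simp [pathWords]
  rw [this]
  refine hS.biUnion fun x _ ↦ ((List.tails x.toWord).finite_toSet).subset fun v hv ↦ ?_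
  exact (List.mem_tails _ _).2 hv

theorem EquivariantWithin.map_smul_of_mem {X Y : Type*} [MulAction (FreeGroup α) X]
    [MulAction (FreeGroup α) Y] {S : Set (FreeGroup α)} {y : Y} {ι : Y → X}
    (hι : EquivariantWithin α ((fun v ↦ mk v • y) '' pathWords S) ι)
    {v : List (α × Bool)} (hv : v ∈ pathWords S) :
    ι (mk v • y) = mk v • ι y := by
  obtain ⟨x, hx, hvx⟩ := hv
  exact hι.map_mk_smul fun w hw ↦ ⟨w, ⟨x, hx, hw.trans hvx⟩, rfl⟩

theorem toWord_mem_pathWords {S : Set (FreeGroup α)} {x : FreeGroup α} (hx : x ∈ S) :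
    x.toWord ∈ pathWords S := ⟨x, hx, List.suffix_rfl⟩

end Words

section Hall

theorem finiteIndex_stabilizer {G X : Type*} [Group G] [MulAction G X] [Finite X] (x : X) :
    (MulAction.stabilizer G x).FiniteIndex := by
  have := Finite.of_equiv _ (MulAction.orbitEquivQuotientStabilizer G x)
  exact Subgroup.finiteIndex_of_finite_quotient

theorem exists_perm_eq_of_injOn {X : Type*} [Finite X] {f : X → X} {D : Set X} (hf : D.InjOn f) :
    ∃ σ : Equiv.Perm X, ∀ x ∈ D, σ x = f x := by
  classical
  have := Fintype.ofFinite X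
  let e : {x // x ∈ D} ≃ {x // x ∈ f '' D} := (Equiv.Set.imageOfInjOn f D hf)
  exact ⟨e.extendSubtype, fun x hx ↦ e.extendSubtype_apply_of_mem x hx⟩

theorem exists_finite_equivariantWithin {α : Type*} {Y : Type u} [MulAction (FreeGroup α) Y]
    {Y₀ : Set Y} (hfin : Y₀.Finite) (hne : Y₀.Nonempty) :
    ∃ (X : Type u) (_ : MulAction (FreeGroup α) X) (ι : Y → X), Finite X ∧
      Y₀.InjOn ι ∧ EquivariantWithin α Y₀ ι := by
  have := hfin.to_subtype
  obtain ⟨r, hr⟩ : ∃ r : Y → Y₀, ∀ y : Y₀, r y = y :=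
    have := hne.to_subtype
    ⟨Function.invFun Subtype.val, Function.leftInverse_invFun Subtype.val_injective⟩
  have hσ (s : α) : ∃ σ : Equiv.Perm Y₀, ∀ y ∈ {y : Y₀ | of s • (y : Y) ∈ Y₀},
      σ y = r (of s • (y : Y)) := by
    refine exists_perm_eq_of_injOn fun y hy z hz h ↦ ?_
    have h' : r ↑(⟨_, hy⟩ : Y₀) = r ↑(⟨_, hz⟩ : Y₀) := h
    rw [hr, hr, Subtype.mk.injEq] at h'
    exact Subtype.ext (smul_left_cancel _ h')
  choose σ hσ using hσ
  refine ⟨Y₀, MulAction.compHom Y₀ (FreeGroup.lift σ), r, this, fun y hy z hz h ↦ ?_,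
    fun s y hy hsy ↦ ?_⟩
  · have h' : r ↑(⟨_, hy⟩ : Y₀) = r ↑(⟨_, hz⟩ : Y₀) := h
    rwa [hr, hr, Subtype.mk.injEq] at h'
  · have hy' : r y = ⟨y, hy⟩ := hr ⟨y, hy⟩
    change r (of s • y) = FreeGroup.lift σ (of s) (r y)
    rw [FreeGroup.lift_apply_of, hy', hσ s ⟨y, hy⟩ hsy]

/-- **Marshall Hall's theorem** -/
theorem exists_finiteIndex_notMem_of_freeGroup {α : Type*} {L : Subgroup (FreeGroup α)} (hL : L.FG)
    {x : FreeGroup α} (hx : x ∉ L) :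
    ∃ K : Subgroup (FreeGroup α), K.FiniteIndex ∧ L ≤ K ∧ x ∉ K := by
  classical
  obtain ⟨S, rfl, hS⟩ := (Subgroup.fg_iff _).1 hL
  set L := Subgroup.closure S
  let y : FreeGroup α ⧸ L := (1 : FreeGroup α)
  have hy (z : FreeGroup α) : z • y = z := by simp [y]
  have hT : (pathWords (insert x (insert 1 S))).Finite := pathWords_finite ((hS.insert 1).insert x)
  obtain ⟨X, _, ι, _, hinj, hι⟩ := exists_finite_equivariantWithin (α := α)
    (hT.image fun v ↦ mk v • y) ⟨_, _, toWord_mem_pathWords (Set.mem_insert _ _), rfl⟩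
  have hmem {z : FreeGroup α} (hz : z ∈ insert x (insert 1 S)) : ι z = z • ι y := by
    simpa only [FreeGroup.mk_toWord, hy] using hι.map_smul_of_mem (toWord_mem_pathWords hz)
  have hmem₀ {z : FreeGroup α} (hz : z ∈ insert x (insert 1 S)) :
      (z : FreeGroup α ⧸ L) ∈ (fun v ↦ mk v • y) '' pathWords (insert x (insert 1 S)) :=
    ⟨_, toWord_mem_pathWords hz, by simp only [FreeGroup.mk_toWord, hy]⟩
  refine ⟨MulAction.stabilizer _ (ι y), ?_, (Subgroup.closure_le _).2 fun s hs ↦ ?_,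
    fun hxK ↦ hx ?_⟩
  · exact finiteIndex_stabilizer _
  · rw [SetLike.mem_coe, MulAction.mem_stabilizer_iff, ← hmem (.inr (.inr hs))]
    congr 1
    exact QuotientGroup.eq.2 (by simpa using Subgroup.subset_closure hs)
  · rw [MulAction.mem_stabilizer_iff, ← hmem (.inl rfl)] at hxK
    have := hinj (hmem₀ (.inl rfl)) (hmem₀ (.inr (.inl rfl))) hxK
    simpa using QuotientGroup.eq.1 this

end Hall

section Unwrapping

variable {α Y P : Type*} [MulAction (FreeGroup α) Y] [Group P]

/-- The edge of the Schreier graph of `Y` along which the letter `ℓ` moves the vertex `y`, encoded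
as the pair (label, source). -/
def letterEdge (ℓ : α × Bool) (y : Y) : α × Y :=
  (ℓ.1, if ℓ.2 then y else mk [ℓ] • y)

/-- The Schreier graph of `Y` in which every edge `e ∈ N` is replaced by a copy of the Cayley graph
of `φ : FreeGroup α → P`, cut open at the edge which ends at `1` and has the label of `e`; the
vertices of this copy are `copy e p`. -/
inductive Unwrapping (N : Set (α × Y)) (φ : FreeGroup α →* P)
  | base (y : Y)
  | copy (e : N) (p : P)

namespace Unwrapping

variable {N : Set (α × Y)} {φ : FreeGroup α →* P}

variable (φ) in
/-- The point at which the letter `ℓ` enters a copy of the Cayley graph. -/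
def entry (ℓ : α × Bool) : P := if ℓ.2 then 1 else φ (mk [ℓ])

open Classical in
/-- The action of a letter on the unwrapping. -/
noncomputable def step (ℓ : α × Bool) : Unwrapping N φ → Unwrapping N φ
  | base y => if h : letterEdge ℓ y ∈ N then copy ⟨_, h⟩ (entry φ ℓ) else
      base (mk [ℓ] • y)
  | copy e p => if e.1.1 = ℓ.1 ∧ φ (mk [ℓ]) * p = entry φ ℓ then
      base (if ℓ.2 then of ℓ.1 • e.1.2 else e.1.2) else copy e (φ (mk [ℓ]) * p)

theorem step_base_of_mem {ℓ : α × Bool} {y : Y} (h : letterEdge ℓ y ∈ N) :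
    step ℓ (base y : Unwrapping N φ) = copy ⟨_, h⟩ (entry φ ℓ) := dif_pos h

theorem step_base_of_notMem {ℓ : α × Bool} {y : Y} (h : letterEdge ℓ y ∉ N) :
    step ℓ (base y : Unwrapping N φ) = base (mk [ℓ] • y) := dif_neg h

theorem step_copy_of_eq {ℓ : α × Bool} {e : N} {p : P}
    (h : e.1.1 = ℓ.1 ∧ φ (mk [ℓ]) * p = entry φ ℓ) :
    step ℓ (copy e p : Unwrapping N φ) = base (if ℓ.2 then of ℓ.1 • e.1.2 else e.1.2) := if_pos h

theorem step_copy_of_ne {ℓ : α × Bool} {e : N} {p : P}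
    (h : ¬ (e.1.1 = ℓ.1 ∧ φ (mk [ℓ]) * p = entry φ ℓ)) :
    step ℓ (copy e p : Unwrapping N φ) = copy e (φ (mk [ℓ]) * p) := if_neg h

variable (φ) in
theorem inv_mul_entry (ℓ : α × Bool) : (φ (mk [ℓ]))⁻¹ * entry φ ℓ = entry φ (ℓ.1, !ℓ.2) := by
  obtain ⟨s, _ | _⟩ := ℓ <;> simp [entry, mk_singleton_true, mk_singleton_false]

theorem letterEdge_smul (ℓ : α × Bool) (y : Y) :
    letterEdge (ℓ.1, !ℓ.2) (mk [ℓ] • y) = letterEdge ℓ y := by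
  obtain ⟨s, _ | _⟩ := ℓ <;> simp [letterEdge, mk_singleton_true, mk_singleton_false]

theorem step_not_step (ℓ : α × Bool) (x : Unwrapping N φ) :
    step (ℓ.1, !ℓ.2) (step ℓ x) = x := by
  have hinv : mk [(ℓ.1, !ℓ.2)] = (mk [ℓ])⁻¹ := by simp [FreeGroup.inv_mk, FreeGroup.invRev]
  obtain y | ⟨e, p⟩ := x
  · by_cases h : letterEdge ℓ y ∈ N
    · rw [step_base_of_mem h,
        step_copy_of_eq (by rw [hinv, map_inv, inv_mul_entry]; exact ⟨rfl, rfl⟩)]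
      obtain ⟨s, _ | _⟩ := ℓ <;> simp [letterEdge, mk_singleton_false]
    · rw [step_base_of_notMem h, step_base_of_notMem (by rwa [letterEdge_smul]), hinv,
        inv_smul_smul]
  · by_cases h : e.1.1 = ℓ.1 ∧ φ (mk [ℓ]) * p = entry φ ℓ
    · have hedge : letterEdge (ℓ.1, !ℓ.2) (if ℓ.2 then of ℓ.1 • e.1.2 else e.1.2) = e.1 := by
        refine Prod.ext h.1.symm ?_
        obtain ⟨s, _ | _⟩ := ℓ <;> simp [letterEdge, mk_singleton_false]
      have hp : entry φ (ℓ.1, !ℓ.2) = p := by rw [← inv_mul_entry, ← h.2, inv_mul_cancel_left]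
      rw [step_copy_of_eq h, step_base_of_mem (hedge.symm ▸ e.2)]
      simp only [hedge, hp, Subtype.coe_eta]
    · rw [step_copy_of_ne h, step_copy_of_ne, hinv, map_inv, inv_mul_cancel_left]
      rw [hinv, map_inv, inv_mul_cancel_left, ← inv_mul_entry, eq_inv_mul_iff_mul_eq]
      exact h

/-- The permutation of the unwrapping given by the basis element `s`. -/
noncomputable def perm (s : α) : Equiv.Perm (Unwrapping N φ) where
  toFun := step (s, true)
  invFun := step (s, false)
  left_inv := step_not_step (s, true)
  right_inv := step_not_step (s, false)

noncomputable instance : MulAction (FreeGroup α) (Unwrapping N φ) :=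
  MulAction.compHom _ (FreeGroup.lift (perm (N := N) (φ := φ)))

theorem of_smul (s : α) (x : Unwrapping N φ) : of s • x = step (s, true) x := by
  change FreeGroup.lift (perm (N := N) (φ := φ)) (of s) x = _
  rw [FreeGroup.lift_apply_of]
  rfl

theorem letter_smul (ℓ : α × Bool) (x : Unwrapping N φ) :
    mk [ℓ] • x = step ℓ x := by
  obtain ⟨s, _ | _⟩ := ℓ
  · rw [mk_singleton_false, inv_smul_eq_iff, of_smul]
    exact (step_not_step (s, false) x).symm
  · exact of_smul s x

instance [Finite N] [Finite Y] [Finite P] : Finite (Unwrapping N φ) := by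
  refine Finite.of_surjective (α := Y ⊕ N × P) (Sum.elim base fun x ↦ copy x.1 x.2) ?_
  rintro (y | ⟨e, p⟩)
  · exact ⟨.inl y, rfl⟩
  · exact ⟨.inr (e, p), rfl⟩

variable (N φ) in
/-- The projection of the unwrapping to `Y`, where `ψ` describes the action of `P` on `Y`. -/
def proj (ψ : P →* Equiv.Perm Y) : Unwrapping N φ → Y
  | base y => y
  | copy e p => ψ p (of e.1.1 • e.1.2)

theorem proj_smul {ψ : P →* Equiv.Perm Y} (hψ : ∀ a y, ψ (φ a) y = a • y) (a : FreeGroup α)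
    (x : Unwrapping N φ) : proj N φ ψ (a • x) = a • proj N φ ψ x := by
  have of_smul_proj (s : α) (x : Unwrapping N φ) : proj N φ ψ (of s • x) = of s • proj N φ ψ x := by
    rw [of_smul]
    obtain y | ⟨e, p⟩ := x
    · by_cases h : letterEdge (s, true) y ∈ N
      · rw [step_base_of_mem h]
        simp [proj, entry, letterEdge]
      · rw [step_base_of_notMem h]
        rfl
    · by_cases h : e.1.1 = s ∧ φ (of s) * p = 1
      · have hp : p = φ (of s)⁻¹ := by rw [map_inv, eq_inv_of_mul_eq_one_right h.2]
        rw [step_copy_of_eq h, proj, proj, hp, hψ, h.1, smul_inv_smul, if_pos rfl]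
      · rw [step_copy_of_ne h, proj, proj, map_mul, Equiv.Perm.mul_apply]
        exact hψ _ _
  induction a using FreeGroup.induction_on generalizing x with
  | C1 => simp
  | of s => exact of_smul_proj s x
  | inv_of s _ => rw [eq_inv_smul_iff, ← of_smul_proj, smul_inv_smul]
  | mul a b iha ihb => rw [mul_smul, iha, ihb, mul_smul]

end Unwrapping
end Unwrapping

theorem isReduced_invRev {α : Type*} {w : List (α × Bool)} (hw : FreeGroup.IsReduced w) :
    FreeGroup.IsReduced (FreeGroup.invRev w) := by
  classical
  rw [FreeGroup.isReduced_iff_reduce_eq, FreeGroup.reduce_invRev, hw.reduce_eq]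

section ShortWords

variable {α Y P : Type*} [MulAction (FreeGroup α) Y] [Group P]

/-- `φ` kills no nonempty reduced word of length at most `n`. -/
def InjOnShortWords (φ : FreeGroup α →* P) (n : ℕ) : Prop :=
  ∀ w : List (α × Bool), FreeGroup.IsReduced w → w ≠ [] → w.length ≤ n → φ (mk w) ≠ 1

namespace Unwrapping

variable {N : Set (α × Y)} {φ : FreeGroup α →* P}

theorem mul_entry_ne {n : ℕ} (hφ : InjOnShortWords φ n) {v : List (α × Bool)}
    {k ℓ : α × Bool} (hred : FreeGroup.IsReduced (k :: v ++ [ℓ]))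
    (hlen : (k :: v ++ [ℓ]).length ≤ n) (hkℓ : k.1 = ℓ.1) :
    φ (mk (k :: v)) * entry φ ℓ ≠ entry φ k := by
  have hlen' : (k :: v).length ≤ n := by
    simp only [List.length_append] at hlen; lia
  have hkv : φ (mk (k :: v)) ≠ 1 :=
    hφ _ (hred.infix (List.prefix_append _ _).isInfix) (List.cons_ne_nil _ _) hlen'
  obtain ⟨s, b⟩ := ℓ
  obtain ⟨t, c⟩ := k
  obtain rfl : t = s := hkℓ
  intro h
  rcases b with _ | _ <;> rcases c with _ | _
  · exact hkv (mul_eq_right.1 h)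
  · refine hφ _ hred (by simp) hlen ?_
    rw [← FreeGroup.mul_mk, map_mul]
    simpa [entry] using h
  · have hv : φ (mk v) = 1 := by
      rw [← List.singleton_append, ← FreeGroup.mul_mk, map_mul] at h
      simpa [entry] using h
    rcases eq_or_ne v [] with rfl | hne
    · simp at hred
    · refine hφ v (hred.infix ⟨[_], [_], rfl⟩) hne ?_ hv
      rw [List.length_cons] at hlen'
      lia
  · exact hkv (by simpa [entry] using h)

theorem mk_smul_copy_entry {n : ℕ} (hφ : InjOnShortWords φ n) {ℓ : α × Bool} {e : N}
    (heℓ : e.1.1 = ℓ.1) {v : List (α × Bool)} (hred : FreeGroup.IsReduced (v ++ [ℓ]))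
    (hlen : (v ++ [ℓ]).length ≤ n) :
    mk v • (copy e (entry φ ℓ) : Unwrapping N φ) = copy e (φ (mk v) * entry φ ℓ) := by
  induction v with
  | nil => simp [← FreeGroup.one_eq_mk]
  | cons k v ih =>
    have hsuf : v ++ [ℓ] <:+ k :: v ++ [ℓ] := List.suffix_cons k _
    have hmul : φ (mk (k :: v)) = φ (mk [k]) * φ (mk v) := by
      rw [← map_mul, FreeGroup.mul_mk, List.singleton_append]
    rw [mk_cons_smul, ih (hred.infix hsuf.isInfix) (hsuf.length_le.trans hlen), letter_smul,
      step_copy_of_ne, hmul, mul_assoc]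
    rintro ⟨hek, h⟩
    rw [← mul_assoc, ← hmul] at h
    exact mul_entry_ne hφ hred hlen (hek.symm.trans heℓ) h

theorem mk_append_smul_base_ne {n : ℕ} (hφ : InjOnShortWords φ n) {ℓ : α × Bool} {y : Y}
    (hy : letterEdge ℓ y ∈ N) {v : List (α × Bool)} (hred : FreeGroup.IsReduced (v ++ [ℓ]))
    (hlen : (v ++ [ℓ]).length ≤ n) (z : Y) :
    mk (v ++ [ℓ]) • (base y : Unwrapping N φ) ≠ base z := by
  rw [mk_append_smul, letter_smul, step_base_of_mem hy, mk_smul_copy_entry hφ (by rfl) hred hlen]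
  nofun

theorem exists_exit_or_mk_smul_copy (e : N) (p : P) (w : List (α × Bool)) :
    mk w • (copy e p : Unwrapping N φ) = copy e (φ (mk w) * p) ∨
      ∃ u ℓ v, w = u ++ ℓ :: v ∧ ∃ q y, mk v • (copy e p : Unwrapping N φ) = copy e q ∧
        mk [ℓ] • (copy e q : Unwrapping N φ) = base y := by
  induction w with
  | nil => simp [← FreeGroup.one_eq_mk]
  | cons k w ih =>
    obtain h | ⟨u, ℓ, v, rfl, h⟩ := ih
    · have hmul : φ (mk (k :: w)) = φ (mk [k]) * φ (mk w) := by
        rw [← map_mul, FreeGroup.mul_mk, List.singleton_append]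
      by_cases hk : e.1.1 = k.1 ∧ φ (mk [k]) * (φ (mk w) * p) = entry φ k
      · exact .inr ⟨[], k, w, rfl, _, _, h, by rw [letter_smul, step_copy_of_eq hk]⟩
      · rw [mk_cons_smul, h, letter_smul, step_copy_of_ne hk, hmul, mul_assoc]
        exact .inl rfl
    · exact .inr ⟨k :: u, ℓ, v, rfl, h⟩

theorem letterEdge_mem_of_smul_base {ℓ : α × Bool} {y : Y} {e : N} {p : P}
    (h : mk [ℓ] • (base y : Unwrapping N φ) = copy e p) : letterEdge ℓ y ∈ N := by
  by_contra hy
  rw [letter_smul, step_base_of_notMem hy] at h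
  exact nomatch h

theorem mk_smul_copy_ne {n : ℕ} (hφ : InjOnShortWords φ n) {w : List (α × Bool)}
    (hw : FreeGroup.IsCyclicallyReduced w) (hne : w ≠ []) (hlen : w.length ≤ n) (e : N) (p : P) :
    mk w • (copy e p : Unwrapping N φ) ≠ copy e p := by
  intro hfix
  obtain h | ⟨u, ℓ, v, rfl, q, y, hq, hy⟩ := exists_exit_or_mk_smul_copy (φ := φ) e p w
  · rw [h, copy.injEq] at hfix
    exact hφ w hw.isReduced hne hlen (mul_eq_right.1 hfix.2)
  -- Reversed and rotated, the loop enters the copy by its first letter.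
  have hback : mk [(ℓ.1, !ℓ.2)] • (base y : Unwrapping N φ) = copy e q := by
    rw [← hy, letter_smul, letter_smul, step_not_step]
  have hinv : FreeGroup.invRev (v ++ u) ++ [(ℓ.1, !ℓ.2)] = FreeGroup.invRev (ℓ :: (v ++ u)) := by
    simp [FreeGroup.invRev]
  have hred : FreeGroup.IsReduced (FreeGroup.invRev (ℓ :: (v ++ u))) := by
    have hsq := (hw.flatten_replicate 2).isReduced
    exact isReduced_invRev (hsq.infix ⟨u, ℓ :: v, by simp [List.replicate_succ]⟩)
  have hexit : mk (ℓ :: v) • (copy e p : Unwrapping N φ) = base y := by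
    rw [mk_cons_smul, hq, hy]
  have hloop : mk (FreeGroup.invRev (ℓ :: (v ++ u))) • (base y : Unwrapping N φ) = base y := by
    rw [mk_append_smul, hexit] at hfix
    rw [← FreeGroup.inv_mk, inv_smul_eq_iff, ← List.cons_append, mk_append_smul, hfix, hexit]
  refine mk_append_smul_base_ne hφ (letterEdge_mem_of_smul_base hback) (hinv ▸ hred) ?_ y
    (hinv ▸ hloop)
  rw [hinv, FreeGroup.invRev_length]
  simpa [add_comm, add_left_comm, add_assoc] using hlen

end Unwrapping
end ShortWords

section FiniteUnwrapping

theorem exists_finite_injOnShortWords (α : Type u) [Finite α] (n : ℕ) :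
    ∃ (P : Type u) (_ : Group P) (φ : FreeGroup α →* P), Finite P ∧ InjOnShortWords φ n := by
  classical
  let Y₀ : Set (FreeGroup α) := mk '' {w | w.length ≤ n}
  obtain ⟨X, _, ι, _, hinj, hι⟩ := exists_finite_equivariantWithin (α := α) (Y₀ := Y₀)
    ((List.finite_length_le (α × Bool) n).image mk) ⟨1, [], by simp, rfl⟩
  refine ⟨Equiv.Perm X, inferInstance, MulAction.toPermHom (FreeGroup α) X, inferInstance,
    fun w hred hne hlen hw ↦ hne ?_⟩
  have hmk (v : List (α × Bool)) (hv : v.length ≤ n) : mk v • (1 : FreeGroup α) ∈ Y₀ :=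
    ⟨v, hv, (mul_one _).symm⟩
  have hw₁ : ι (mk w • 1) = ι 1 := by
    rw [hι.map_mk_smul fun v hv ↦ hmk v (hv.length_le.trans hlen)]
    exact congrFun (congrArg DFunLike.coe hw) (ι 1)
  have hmk_eq : mk w • (1 : FreeGroup α) = 1 := hinj (hmk w hlen) ⟨[], by simp, rfl⟩ hw₁
  rw [smul_eq_mul, mul_one] at hmk_eq
  simpa [hred.reduce_eq] using congrArg FreeGroup.toWord hmk_eq

variable {α Y : Type u} [MulAction (FreeGroup α) Y]

/-- `ι : Y → X` is a section of `π : X → Y` for which `ι '' Y₀` contains all points of `X` fixed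
by a short cyclically reduced word. -/
structure IsUnwrapping {X : Type*} [MulAction (FreeGroup α) X] (Y₀ : Set Y) (n : ℕ) (π : X → Y)
    (ι : Y → X) : Prop where
  map_smul (a : FreeGroup α) (x : X) : π (a • x) = a • π x
  map_section (y : Y) : π (ι y) = y
  equivariantWithin : EquivariantWithin α Y₀ ι
  mem_image {w : List (α × Bool)} (hw : FreeGroup.IsCyclicallyReduced w) (hne : w ≠ [])
    (hlen : w.length ≤ n) {x : X} (hx : mk w • x = x) : x ∈ ι '' Y₀

theorem exists_finite_isUnwrapping [Finite α] [Finite Y] (Y₀ : Set Y) (n : ℕ) :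
    ∃ (X : Type u) (_ : MulAction (FreeGroup α) X) (π : X → Y) (ι : Y → X), Finite X ∧
      IsUnwrapping (α := α) Y₀ n π ι := by
  obtain ⟨P, _, θ, _, hθ⟩ := exists_finite_injOnShortWords α n
  let N : Set (α × Y) := {e | ¬ (e.2 ∈ Y₀ ∧ of e.1 • e.2 ∈ Y₀)}
  let φ : FreeGroup α →* Equiv.Perm Y × P := (MulAction.toPermHom (FreeGroup α) Y).prod θ
  have hφ : InjOnShortWords φ n := fun w hred hne hlen hw ↦
    hθ w hred hne hlen (congrArg Prod.snd hw)
  refine ⟨Unwrapping N φ, inferInstance, Unwrapping.proj N φ (MonoidHom.fst _ _), Unwrapping.base,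
    inferInstance, Unwrapping.proj_smul fun _ _ ↦ rfl, fun _ ↦ rfl, fun s y hy hsy ↦ ?_,
    fun {w} hw hne hlen x hx ↦ ?_⟩
  · rw [Unwrapping.of_smul, Unwrapping.step_base_of_notMem (not_not.2 ⟨hy, hsy⟩)]
    rfl
  · obtain y | ⟨e, p⟩ := x
    · refine ⟨y, ?_, rfl⟩
      obtain ⟨v, ℓ, rfl⟩ := (List.eq_nil_or_concat' w).resolve_left hne
      have hℓ : letterEdge ℓ y ∉ N := fun h ↦
        Unwrapping.mk_append_smul_base_ne hφ h hw.isReduced hlen y hx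
      obtain ⟨h₁, h₂⟩ := not_not.1 hℓ
      obtain ⟨s, _ | _⟩ := ℓ
      · simpa [letterEdge, mk_singleton_false] using h₂
      · exact h₁
    · exact absurd hx (Unwrapping.mk_smul_copy_ne hφ hw hne hlen e p)

theorem exists_finiteIndex_of_cyclicallyReduced_conj_mem [Finite α] {L : Subgroup (FreeGroup α)}
    (hL : L.FG) : ∃ Z : Set (FreeGroup α), Z.Finite ∧ ∀ (n : ℕ) (K₁ : Subgroup (FreeGroup α)),
      K₁.FiniteIndex → L ≤ K₁ → ∃ K₀ : Subgroup (FreeGroup α), K₀.FiniteIndex ∧ L ≤ K₀ ∧ K₀ ≤ K₁ ∧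
        ∀ w, FreeGroup.IsCyclicallyReduced w → w ≠ [] → w.length ≤ n →
          ∀ y, y⁻¹ * mk w * y ∈ K₀ → ∃ z ∈ Z, z⁻¹ * y ∈ K₀ := by
  classical
  obtain ⟨S, rfl, hS⟩ := (Subgroup.fg_iff _).1 hL
  have hT := pathWords_finite (hS.insert 1)
  refine ⟨mk '' pathWords (insert 1 S), hT.image _, fun n K₁ _ hLK₁ ↦ ?_⟩
  let y₁ : FreeGroup α ⧸ K₁ := (1 : FreeGroup α)
  have hy₁ (a : FreeGroup α) : a • y₁ = a := by simp [y₁]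
  obtain ⟨X, _, π, ι, _, h⟩ := exists_finite_isUnwrapping (α := α)
    ((fun v ↦ mk v • y₁) '' pathWords (insert 1 S)) n
  refine ⟨MulAction.stabilizer _ (ι y₁), finiteIndex_stabilizer _, (Subgroup.closure_le _).2 ?_,
    ?_, ?_⟩
  · intro s hs
    have hsy : s • y₁ = y₁ := by
      rw [hy₁]
      exact QuotientGroup.eq.2 (by simpa using hLK₁ (Subgroup.subset_closure hs))
    have := h.equivariantWithin.map_smul_of_mem (toWord_mem_pathWords (Set.mem_insert_of_mem _ hs))
    rw [FreeGroup.mk_toWord, hsy] at this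
    exact this.symm
  · intro a ha
    have hay : a • y₁ = y₁ := by
      rw [← h.map_section y₁, ← h.map_smul, MulAction.mem_stabilizer_iff.1 ha]
    rw [hy₁] at hay
    simpa using QuotientGroup.eq.1 hay.symm
  · intro w hw hne hlen y hy
    have hfix : mk w • y • ι y₁ = y • ι y₁ := by
      simpa only [MulAction.mem_stabilizer_iff, mul_smul, inv_smul_eq_iff] using hy
    obtain ⟨_, ⟨v, hv, rfl⟩, hvy⟩ := h.mem_image hw hne hlen hfix
    refine ⟨mk v, ⟨v, hv, rfl⟩, ?_⟩
    rw [MulAction.mem_stabilizer_iff, mul_smul, ← hvy, inv_smul_eq_iff]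
    exact h.equivariantWithin.map_smul_of_mem hv

end FiniteUnwrapping

section ConjSeparable

variable {G : Type*} [Group G]

/-- Some finite-index subgroup containing `H` contains no conjugate of `g`. -/
def ConjSeparable (H : Subgroup G) (g : G) : Prop :=
  ∃ K : Subgroup G, K.FiniteIndex ∧ H ≤ K ∧ ∀ a, a⁻¹ * g * a ∉ K

theorem ConjSeparable.exists_finite_quotient {G : Type u} [Group G] {H : Subgroup G} {g : G}
    (h : ConjSeparable H g) :
    ∃ (Q : Type u) (_ : Group Q) (_ : Finite Q) (q : G →* Q), Function.Surjective q ∧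
      ¬ ∃ (k : Q), ∃ x ∈ H.map q, q g = k⁻¹ * x * k := by
  obtain ⟨K, _, hHK, hg⟩ := h
  have hq := QuotientGroup.mk'_surjective K.normalCore
  refine ⟨G ⧸ K.normalCore, inferInstance, inferInstance, QuotientGroup.mk' K.normalCore, hq, ?_⟩
  rintro ⟨k, _, ⟨x, hx, rfl⟩, hk⟩
  obtain ⟨a, rfl⟩ := hq k
  have hax : (QuotientGroup.mk' K.normalCore) (a * g * a⁻¹) = QuotientGroup.mk' K.normalCore x := by
    simp only [map_mul, map_inv, hk]
    group
  refine hg a⁻¹ ?_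
  have := K.normalCore_le (QuotientGroup.eq.1 hax)
  simpa using (K.inv_mem ((K.mul_mem_cancel_right (hHK hx)).1 this))

open Pointwise in
theorem exists_finiteIndex_subset_mul (H K : Subgroup G) [K.FiniteIndex] :
    ∃ M : Subgroup G, M.FiniteIndex ∧ H ≤ M ∧ (M : Set G) ⊆ H * K := by
  let A : Set (G ⧸ K) := (fun h : G ↦ (h : G ⧸ K)) '' H
  refine ⟨MulAction.stabilizer G A, finiteIndex_stabilizer A, fun h hh ↦ ?_, fun m hm ↦ ?_⟩
  · refine Set.Subset.antisymm ?_ fun _ ⟨k, hk, hkx⟩ ↦ ?_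
    · rintro _ ⟨_, ⟨k, hk, rfl⟩, rfl⟩
      exact ⟨h * k, H.mul_mem hh hk, rfl⟩
    · exact ⟨_, ⟨h⁻¹ * k, H.mul_mem (H.inv_mem hh) hk, rfl⟩, by simp [← hkx]⟩
  · have hmA : m • ((1 : G) : G ⧸ K) ∈ A :=
      (MulAction.mem_stabilizer_iff.1 hm) ▸ Set.smul_mem_smul_set ⟨1, H.one_mem, rfl⟩
    obtain ⟨h, hh, hhm⟩ := hmA
    exact ⟨h, hh, h⁻¹ * m, by simpa using QuotientGroup.eq.1 hhm, by simp⟩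

end ConjSeparable

section FiniteIndexRange

variable {F G : Type*} [Group F] [Group G] {θ : F →* G}

theorem fg_comap_of_injective (hθ : Function.Injective θ) [θ.range.FiniteIndex] {H : Subgroup G}
    (hH : H.FG) : (H.comap θ).FG := by
  have : Group.FG H := (Group.fg_iff_subgroup_fg H).2 hH
  have hj : Function.Injective (θ.subgroupComap H) := fun x y h ↦
    Subtype.ext (hθ (congrArg Subtype.val h))
  have hrange : (θ.subgroupComap H).range = θ.range.subgroupOf H := by
    ext ⟨x, hx⟩
    constructor
    · rintro ⟨y, hy⟩
      exact ⟨y, congrArg Subtype.val hy⟩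
    · rintro ⟨y, rfl⟩
      exact ⟨⟨y, hx⟩, rfl⟩
  have : Group.FG (θ.subgroupComap H).range := hrange ▸ inferInstance
  exact (Group.fg_iff_subgroup_fg _).1 <|
    Group.fg_of_surjective (f := (MonoidHom.ofInjective hj).symm.toMonoidHom)
      (MonoidHom.ofInjective hj).symm.surjective

theorem finiteIndex_map (θ : F →* G) [θ.range.FiniteIndex] (K : Subgroup F) [K.FiniteIndex] :
    (K.map θ).FiniteIndex := by
  have : (K ⊔ θ.ker).FiniteIndex := Subgroup.finiteIndex_of_le le_sup_left
  exact ⟨by rw [Subgroup.index_map]; exact mul_ne_zero this.1 Subgroup.FiniteIndex.index_ne_zero⟩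

theorem finiteIndex_comap (θ : F →* G) (K : Subgroup G) [K.FiniteIndex] :
    (K.comap θ).FiniteIndex :=
  ⟨by rw [Subgroup.index_comap]; exact Subgroup.isFiniteRelIndex_of_finiteIndex.relIndex_ne_zero⟩

theorem exists_finiteIndex_comap_le [θ.range.FiniteIndex] {H : Subgroup G}
    {K : Subgroup F} [K.FiniteIndex] (hHK : H.comap θ ≤ K) :
    ∃ M : Subgroup G, M.FiniteIndex ∧ H ≤ M ∧ M.comap θ ≤ K := by
  have := finiteIndex_map θ K
  obtain ⟨M, hfin, hHM, hM⟩ := exists_finiteIndex_subset_mul H (K.map θ)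
  refine ⟨M, hfin, hHM, fun y hy ↦ ?_⟩
  obtain ⟨h, hh, _, ⟨k, hk, rfl⟩, hy⟩ := hM hy
  have hyk : y * k⁻¹ ∈ H.comap θ := by
    rwa [Subgroup.mem_comap, map_mul, map_inv, ← hy, mul_inv_cancel_right]
  exact (K.mul_mem_cancel_right (K.inv_mem hk)).1 (hHK hyk)

end FiniteIndexRange

section VirtuallyFree

variable {G : Type*} [Group G] {α : Type u} {θ : FreeGroup α →* G}

theorem exists_finiteIndex_notMem (hθ : Function.Injective θ) [θ.range.FiniteIndex]
    {H : Subgroup G} (hH : H.FG) {x : G} (hx : x ∉ H) :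
    ∃ M : Subgroup G, M.FiniteIndex ∧ H ≤ M ∧ x ∉ M := by
  by_cases hcoset : ∃ h ∈ H, ∃ y, θ y = h⁻¹ * x
  · obtain ⟨h, hh, y, hy⟩ := hcoset
    have hyL : y ∉ H.comap θ := by
      rwa [Subgroup.mem_comap, hy, H.mul_mem_cancel_left (H.inv_mem hh)]
    obtain ⟨K, _, hLK, hyK⟩ :=
      exists_finiteIndex_notMem_of_freeGroup (fg_comap_of_injective hθ hH) hyL
    obtain ⟨M, hMfin, hHM, hMK⟩ := exists_finiteIndex_comap_le hLK
    refine ⟨M, hMfin, hHM, fun hxM ↦ hyK (hMK ?_)⟩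
    rw [Subgroup.mem_comap, hy]
    exact M.mul_mem (M.inv_mem (hHM hh)) hxM
  · obtain ⟨M, hMfin, hHM, hM⟩ := exists_finiteIndex_subset_mul H θ.range
    refine ⟨M, hMfin, hHM, fun hxM ↦ hcoset ?_⟩
    obtain ⟨h, hh, _, ⟨y, rfl⟩, rfl⟩ := hM hxM
    exact ⟨h, hh, y, by simp⟩

theorem exists_finiteIndex_disjoint (hθ : Function.Injective θ) [θ.range.FiniteIndex]
    {H : Subgroup G} (hH : H.FG) {T : Set G} (hT : T.Finite) (hTH : Disjoint T H) :
    ∃ M : Subgroup G, M.FiniteIndex ∧ H ≤ M ∧ Disjoint T M := by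
  have := hT.to_subtype
  choose M hfin hHM hM using fun x : T ↦
    exists_finiteIndex_notMem hθ hH (Set.disjoint_left.1 hTH x.2)
  exact ⟨⨅ x, M x, Subgroup.finiteIndex_iInf hfin, le_iInf hHM, Set.disjoint_left.2 fun x hx hxM ↦
    hM ⟨x, hx⟩ (Subgroup.mem_iInf.1 hxM _)⟩

theorem exists_conj_eq_mk_isCyclicallyReduced {x : FreeGroup α} (hx : x ≠ 1) :
    ∃ c w, FreeGroup.IsCyclicallyReduced w ∧ w ≠ [] ∧ c⁻¹ * x * c = mk w := by
  classical
  let w := FreeGroup.reduceCyclically x.toWord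
  let c := FreeGroup.reduceCyclically.conjugator x.toWord
  have hconj : mk c * mk w * (mk c)⁻¹ = x := by
    rw [FreeGroup.mul_mk, FreeGroup.inv_mk, FreeGroup.mul_mk,
      FreeGroup.reduceCyclically.conj_conjugator_reduceCyclically, FreeGroup.mk_toWord]
  refine ⟨mk c, w, FreeGroup.reduceCyclically.isCyclicallyReduced FreeGroup.isReduced_toWord,
    fun hw ↦ hx ?_, ?_⟩
  · rw [← hconj, hw, ← FreeGroup.one_eq_mk, mul_one, mul_inv_cancel]
  · rw [← hconj]
    group

theorem exists_rep_conj_eq_mk_isCyclicallyReduced [θ.range.Normal] [θ.range.FiniteIndex] {g : G}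
    (hg : ¬ IsOfFinOrder g) (i : G ⧸ θ.range) :
    ∃ (b : G) (w : List (α × Bool)), (b : G ⧸ θ.range) = i ∧ FreeGroup.IsCyclicallyReduced w ∧
      w ≠ [] ∧ b⁻¹ * g ^ θ.range.index * b = θ (mk w) := by
  set m := θ.range.index
  have hm : 0 < m := Nat.pos_of_ne_zero Subgroup.FiniteIndex.index_ne_zero
  obtain ⟨a, rfl⟩ := QuotientGroup.mk_surjective i
  obtain ⟨x, hx⟩ : a⁻¹ * g ^ m * a ∈ θ.range :=
    Subgroup.Normal.conj_mem' inferInstance _ (Subgroup.pow_index_mem _ g) a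
  have hx₁ : x ≠ 1 := by
    rintro rfl
    rw [map_one, eq_comm, mul_assoc, inv_mul_eq_one, right_eq_mul] at hx
    exact hg (isOfFinOrder_iff_pow_eq_one.2 ⟨m, hm, hx⟩)
  obtain ⟨c, w, hw, hne, hcw⟩ := exists_conj_eq_mk_isCyclicallyReduced hx₁
  refine ⟨a * θ c, w, QuotientGroup.mk_mul_of_mem _ ⟨c, rfl⟩, hw, hne, ?_⟩
  rw [← hcw, map_mul, map_mul, hx, map_inv]
  group

theorem conjSeparable_of_not_isOfFinOrder [Finite α] (hθ : Function.Injective θ) [θ.range.Normal]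
    [θ.range.FiniteIndex] {H : Subgroup G} (hH : H.FG) {g : G} (hg : ¬ IsOfFinOrder g)
    (hgH : ∀ a, a⁻¹ * g * a ∉ H) : ConjSeparable H g := by
  choose b w hb hw hne hbw using exists_rep_conj_eq_mk_isCyclicallyReduced (θ := θ) hg
  obtain ⟨n, hn⟩ := Finite.exists_le fun i ↦ (w i).length
  obtain ⟨Z, hZfin, hZ⟩ := exists_finiteIndex_of_cyclicallyReduced_conj_mem
    (fg_comap_of_injective hθ hH)
  obtain ⟨M₁, _, hHM₁, hM₁⟩ := exists_finiteIndex_disjoint hθ hH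
    (T := ⋃ i, (fun z ↦ (b i * θ z)⁻¹ * g * (b i * θ z)) '' Z)
    (Set.finite_iUnion fun i ↦ hZfin.image _)
    (Set.disjoint_left.2 fun x hx ↦ by
      obtain ⟨i, z, -, rfl⟩ := Set.mem_iUnion.1 hx
      exact hgH _)
  obtain ⟨K₀, _, hLK₀, hK₀M₁, hK₀⟩ := hZ n (M₁.comap θ) (finiteIndex_comap θ M₁)
    (Subgroup.comap_mono hHM₁)
  obtain ⟨M₂, _, hHM₂, hM₂⟩ := exists_finiteIndex_comap_le hLK₀
  refine ⟨M₁ ⊓ M₂, inferInstance, le_inf hHM₁ hHM₂, fun a ha ↦ ?_⟩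
  obtain ⟨i, y, rfl⟩ : ∃ i y, b i * θ y = a := by
    obtain ⟨y, hy⟩ := QuotientGroup.eq.1 (hb a)
    exact ⟨a, y, by rw [hy, mul_inv_cancel_left]⟩
  have hy : y⁻¹ * mk (w i) * y ∈ K₀ := hM₂ <| by
    have hpow : ((b i * θ y)⁻¹ * g * (b i * θ y)) ^ θ.range.index = θ (y⁻¹ * mk (w i) * y) := by
      rw [map_mul, map_mul, ← hbw, map_inv]
      simpa [mul_assoc] using conj_pow (a := (b i * θ y)⁻¹) (b := g) (i := θ.range.index)
    rw [Subgroup.mem_comap, ← hpow]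
    exact M₂.pow_mem ha.2 _
  obtain ⟨z, hz, hzy⟩ := hK₀ (w i) (hw i) (hne i) (hn i) y hy
  have hzM₁ : θ (z⁻¹ * y) ∈ M₁ := hK₀M₁ hzy
  refine Set.disjoint_left.1 hM₁ (Set.mem_iUnion.2 ⟨i, z, hz, rfl⟩) ?_
  have hconj : (b i * θ z)⁻¹ * g * (b i * θ z) =
      θ (z⁻¹ * y) * ((b i * θ y)⁻¹ * g * (b i * θ y)) * (θ (z⁻¹ * y))⁻¹ := by
    rw [map_mul, map_inv]
    group
  change (b i * θ z)⁻¹ * g * (b i * θ z) ∈ M₁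
  rw [hconj]
  exact M₁.mul_mem (M₁.mul_mem hzM₁ ha.1) (M₁.inv_mem hzM₁)

end VirtuallyFree

section EquivariantExtension

open MulAction

theorem smul_eq_smul_of_stabilizer_eq {A S W : Type*} [Group A] [MulAction A S] [MulAction A W]
    {x : S} {w : W} (h : stabilizer A x = stabilizer A w) {a b : A} :
    a • x = b • x ↔ a • w = b • w := by
  have h₁ (c : A) : c • x = x ↔ c • w = w := by
    rw [← mem_stabilizer_iff, ← mem_stabilizer_iff, h]
  simpa only [mul_smul, inv_smul_eq_iff] using h₁ (b⁻¹ * a)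

theorem stabilizer_apply_eq_of_injOn {A S W : Type*} [Group A] [MulAction A S] [MulAction A W]
    {β : S → W} (hβ : ∀ (a : A) x, β (a • x) = a • β x) {Y : Set S}
    (hY : ∀ (a : A), ∀ y ∈ Y, a • y ∈ Y) (hinj : Y.InjOn β) {y : S} (hy : y ∈ Y) :
    stabilizer A (β y) = stabilizer A y := by
  ext a
  rw [mem_stabilizer_iff, mem_stabilizer_iff, ← hβ]
  exact ⟨fun h ↦ hinj (hY a y hy) hy h, fun h ↦ by rw [h]⟩

theorem exists_stabilizer_eq_notMem_image {A S W : Type*} [Group A] [MulAction A S] [MulAction A W]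
    {X Y : Set S} {X' : Set W} (hX : X.Finite) (hYX : Y ⊆ X)
    (hY : ∀ (a : A), ∀ y ∈ Y, a • y ∈ Y)
    (hcard : ∀ L : Subgroup A,
      {x ∈ X | stabilizer A x = L}.ncard ≤ {w ∈ X' | stabilizer A w = L}.ncard)
    {β : S → W} (hβ : ∀ (a : A) x, β (a • x) = a • β x) (hinj : Y.InjOn β)
    {x : S} (hxX : x ∈ X) (hxY : x ∉ Y) :
    ∃ w ∈ X', stabilizer A x = stabilizer A w ∧ w ∉ β '' Y := by
  set L := stabilizer A x with hL
  have hlt : {y ∈ Y | stabilizer A y = L}.ncard < {y ∈ X | stabilizer A y = L}.ncard :=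
    Set.ncard_lt_ncard ⟨fun y hy ↦ ⟨hYX hy.1, hy.2⟩, fun h ↦ hxY (h ⟨hxX, hL.symm⟩).1⟩
      (hX.subset (Set.sep_subset _ _))
  have hY_fin : {y ∈ Y | stabilizer A y = L}.Finite := (hX.subset hYX).subset (Set.sep_subset _ _)
  obtain ⟨w, ⟨hw, hwL⟩, hwY⟩ := Set.exists_mem_notMem_of_ncard_lt_ncard
    (((Set.ncard_image_le (f := β) hY_fin).trans_lt hlt).trans_le (hcard L)) (hY_fin.image β)
  refine ⟨w, hw, hwL.symm, ?_⟩
  rintro ⟨y, hy, rfl⟩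
  exact hwY ⟨y, ⟨hy, (stabilizer_apply_eq_of_injOn hβ hY hinj hy).symm.trans hwL⟩, rfl⟩

theorem exists_equivariant_redefine_orbit {A S W : Type*} [Group A] [MulAction A S]
    [MulAction A W] {β : S → W} (hβ : ∀ (a : A) x, β (a • x) = a • β x) {x : S} {w : W}
    (h : stabilizer A x = stabilizer A w) :
    ∃ f : S → W, (∀ (a : A) x, f (a • x) = a • f x) ∧ (∀ a : A, f (a • x) = a • w) ∧
      ∀ y ∉ orbit A x, f y = β y := by
  classical
  set f := Function.extend (fun a : A ↦ a • x) (fun a ↦ a • w) β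
  have hf_orbit (a : A) : f (a • x) = a • w :=
    Function.FactorsThrough.extend_apply
      (fun _ _ hab ↦ (smul_eq_smul_of_stabilizer_eq h).1 hab) β a
  have hf_off (y) (hy : y ∉ orbit A x) : f y = β y := Function.extend_apply' _ _ _ hy
  refine ⟨f, fun a y ↦ ?_, hf_orbit, hf_off⟩
  by_cases hy : y ∈ orbit A x
  · obtain ⟨b, rfl⟩ := hy
    simp only [hf_orbit, ← mul_smul]
  · rw [hf_off y hy, hf_off _ (fun h ↦ hy (by simpa using mem_orbit_of_mem_orbit a⁻¹ h)), hβ]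

theorem exists_equivariant_injOn_extension {A S W : Type*} [Group A] [MulAction A S]
    [MulAction A W] {X : Set S} {X' : Set W} (hX : X.Finite)
    (hXA : ∀ (a : A), ∀ x ∈ X, a • x ∈ X) (hXA' : ∀ (a : A), ∀ w ∈ X', a • w ∈ X')
    (hcard : ∀ L : Subgroup A,
      {x ∈ X | stabilizer A x = L}.ncard ≤ {w ∈ X' | stabilizer A w = L}.ncard)
    {Y : Set S} (hYX : Y ⊆ X) (hY : ∀ (a : A), ∀ y ∈ Y, a • y ∈ Y)
    {β : S → W} (hβ : ∀ (a : A) x, β (a • x) = a • β x) (hinj : Y.InjOn β)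
    (hmaps : Set.MapsTo β Y X') :
    ∃ f : S → W, (∀ (a : A) x, f (a • x) = a • f x) ∧ X.InjOn f ∧ Set.MapsTo f X X' ∧
      Set.EqOn f β Y := by
  induction hn : (X \ Y).ncard using Nat.strong_induction_on generalizing Y β with
  | _ n ih =>
  obtain hXY | ⟨x, hxX, hxY⟩ := (X \ Y).eq_empty_or_nonempty
  · obtain rfl : X = Y := (Set.sdiff_eq_empty.1 hXY).antisymm hYX
    exact ⟨β, hβ, hinj, hmaps, fun _ _ ↦ rfl⟩
  obtain ⟨w, hw, hst, hwY⟩ :=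
    exists_stabilizer_eq_notMem_image hX hYX hY hcard hβ hinj hxX hxY
  obtain ⟨f, hf, hf_orbit, hf_off⟩ := exists_equivariant_redefine_orbit hβ hst
  have hdisj (y) (hy : y ∈ Y) : y ∉ orbit A x := by
    rintro ⟨a, rfl⟩
    exact hxY (by simpa using hY a⁻¹ _ hy)
  have hfY : Set.EqOn f β Y := fun y hy ↦ hf_off y (hdisj y hy)
  have hne (a : A) (y) (hy : y ∈ Y) : f (a • x) ≠ f y := by
    rw [hf_orbit, hfY hy]
    intro h
    exact hwY ⟨a⁻¹ • y, hY _ y hy, by rw [hβ, ← h, inv_smul_smul]⟩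
  have hlt : (X \ (Y ∪ orbit A x)).ncard < n := by
    rw [← hn]
    refine Set.ncard_lt_ncard ⟨Set.sdiff_subset_sdiff_right Set.subset_union_left, fun h ↦ ?_⟩
      (hX.subset Set.sdiff_subset)
    exact (h ⟨hxX, hxY⟩).2 (Or.inr (mem_orbit_self x))
  have hinj_f : (Y ∪ orbit A x).InjOn f := by
    rintro y (hy | ⟨a, rfl⟩) z (hz | ⟨b, rfl⟩) h
    · exact hinj hy hz (by rwa [hfY hy, hfY hz] at h)
    · exact (hne b y hy h.symm).elim
    · exact (hne a z hz h).elim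
    · simp only [hf_orbit] at h
      exact (smul_eq_smul_of_stabilizer_eq hst).2 h
  have hmaps_f : Set.MapsTo f (Y ∪ orbit A x) X' := by
    rintro y (hy | ⟨a, rfl⟩)
    · exact hfY hy ▸ hmaps hy
    · exact hf_orbit a ▸ hXA' a w hw
  obtain ⟨f', hf', hinj', hmaps', heq'⟩ := ih _ hlt
    (Set.union_subset hYX (by rintro _ ⟨a, rfl⟩; exact hXA a x hxX))
    (fun a y hy ↦ hy.imp (hY a y) (mem_orbit_of_mem_orbit a)) hf hinj_f hmaps_f rfl
  exact ⟨f', hf', hinj', hmaps', fun y hy ↦ (heq' (Or.inl hy)).trans (hfY hy)⟩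

theorem exists_equivariant_bijective_extension {A S W : Type*} [Group A] [MulAction A S]
    [MulAction A W] [Finite W] {B : Set W} (hB : ∀ (a : A) w, a • w ∈ B ↔ w ∈ B)
    {I : Set S} (hI : ∀ (a : A), ∀ s ∈ I, a • s ∈ I) {i j : S → W}
    (hi : ∀ (a : A) s, i (a • s) = a • i s) (hj : ∀ (a : A) s, j (a • s) = a • j s)
    (hi_inj : I.InjOn i) (hj_inj : I.InjOn j) (hiB : Set.MapsTo i I B) (hjB : Set.MapsTo j I B) :
    ∃ τ : W → W, Function.Bijective τ ∧ (∀ (a : A) w, τ (a • w) = a • τ w) ∧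
      (∀ w, τ w ∈ B ↔ w ∈ B) ∧ ∀ s ∈ I, τ (i s) = j s := by
  set β : W → W := Function.extend (fun s : I ↦ i s) (fun s ↦ j s) id
  have hβ_image (s) (hs : s ∈ I) : β (i s) = j s :=
    Function.Injective.extend_apply hi_inj.injective (fun s : I ↦ j s) id ⟨s, hs⟩
  have hβ_off (w) (hw : w ∉ i '' I) : β w = w :=
    Function.extend_apply' _ _ _ fun ⟨s, hs⟩ ↦ hw ⟨s, s.2, hs⟩
  have hI_image (a : A) (w) (hw : w ∈ i '' I) : a • w ∈ i '' I := by
    obtain ⟨s, hs, rfl⟩ := hw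
    exact ⟨a • s, hI a s hs, hi a s⟩
  have hβ (a : A) (w) : β (a • w) = a • β w := by
    by_cases hw : w ∈ i '' I
    · obtain ⟨s, hs, rfl⟩ := hw
      rw [← hi, hβ_image _ (hI a s hs), hβ_image s hs, hj]
    · rw [hβ_off w hw, hβ_off _ fun h ↦ hw (by simpa using hI_image a⁻¹ _ h)]
  have hβB (w) (hw : w ∉ B) : β w = w := hβ_off w fun ⟨s, hs, h⟩ ↦ hw (h ▸ hiB hs)
  have hβ_inj : (Bᶜ ∪ i '' I).InjOn β := by
    rintro w (hw | ⟨s, hs, rfl⟩) w' (hw' | ⟨s', hs', rfl⟩) h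
    · rwa [hβB w hw, hβB w' hw'] at h
    · rw [hβB w hw, hβ_image s' hs'] at h
      exact (hw (h ▸ hjB hs')).elim
    · rw [hβB w' hw', hβ_image s hs] at h
      exact (hw' (h ▸ hjB hs)).elim
    · rw [hβ_image s hs, hβ_image s' hs'] at h
      rw [hj_inj hs hs' h]
  obtain ⟨τ, hτ, hτ_inj, -, hτ_eq⟩ := exists_equivariant_injOn_extension (X := Set.univ)
    (X' := Set.univ) (Y := Bᶜ ∪ i '' I) Set.finite_univ (fun _ _ _ ↦ trivial)
    (fun _ _ _ ↦ trivial) (fun _ ↦ le_rfl) (Set.subset_univ _)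
    (fun a w hw ↦ hw.imp (mt (hB a w).1) (hI_image a w)) hβ hβ_inj (Set.mapsTo_univ _ _)
  have hτB (w) (hw : w ∉ B) : τ w = w := (hτ_eq (Or.inl hw)).trans (hβB w hw)
  rw [Set.injOn_univ] at hτ_inj
  refine ⟨τ, Finite.injective_iff_bijective.1 hτ_inj, hτ, fun w ↦ ?_, fun s hs ↦
    (hτ_eq (Or.inr ⟨s, hs, rfl⟩)).trans (hβ_image s hs)⟩
  constructor
  · exact fun h ↦ by_contra fun hw ↦ hw (hτB w hw ▸ h)
  · exact fun hw ↦ by_contra fun h ↦ h (by rwa [hτ_inj (hτB _ h)])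

/-- An equivariant family `F b : S → W` indexed by `b : B` may be chosen orbit by orbit, starting
from a map that is equivariant under the stabilizer of `b`. -/
theorem exists_equivariant_family {G B S W : Type*} [Group G] [MulAction G B] [MulAction G S]
    [MulAction G W] {P : B → (S → W) → Prop}
    (hP : ∀ (g : G) b f, P b f → P (g • b) fun x ↦ g • f (g⁻¹ • x))
    (hex : ∀ b, ∃ f, P b f ∧ ∀ (g : stabilizer G b) x, f (g • x) = g • f x) :
    ∃ F : B → S → W, (∀ b, P b (F b)) ∧ ∀ (g : G) b x, F (g • b) (g • x) = g • F b x := by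
  choose f hPf hf using hex
  let rep (b : B) : B := (Quotient.mk (orbitRel G B) b).out
  have hrep (b) : ∃ t : G, t • rep b = b :=
    (orbitRel G B).symm (Quotient.mk_out (s := orbitRel G B) b)
  have hrep_smul (g : G) (b) : rep (g • b) = rep b :=
    congrArg Quotient.out (Quotient.sound (s := orbitRel G B) ⟨g, rfl⟩)
  choose t ht using hrep
  refine ⟨fun b x ↦ t b • f (rep b) ((t b)⁻¹ • x), fun b ↦ ?_, fun g b x ↦ ?_⟩
  · simpa only [ht] using hP (t b) _ _ (hPf (rep b))
  · have hmem : (t (g • b))⁻¹ * (g * t b) ∈ stabilizer G (rep b) := by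
      rw [mem_stabilizer_iff, mul_smul, mul_smul, ht, inv_smul_eq_iff]
      simpa only [hrep_smul] using (ht (g • b)).symm
    have h := hf (rep b) ⟨_, hmem⟩ ((t b)⁻¹ • x)
    simp only [Subgroup.mk_smul, mul_smul, smul_inv_smul, eq_inv_smul_iff] at h
    simpa only [hrep_smul] using h

end EquivariantExtension

/-- A finite `Q`-set with at least `n` points of every prescribed stabilizer. A point has an inert
label, a finite `support`, and a coset for every index `(D, b)`; an element of `Q` translates the
cosets over the support and fixes the others. The two copies `b` of each `D` allow a stabilizer
`D ≠ ⊤` to occur for supports of either parity. -/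
@[ext]
structure Colour (Q : Type u) [Group Q] (n : ℕ) : Type u where
  label : Fin (n + 1)
  support : Finset ({D : Subgroup Q // D ≠ ⊤} × Bool)
  coset : ∀ i : {D : Subgroup Q // D ≠ ⊤} × Bool, Q ⧸ i.1.1

namespace Colour

open scoped Classical in
noncomputable instance {Q : Type u} [Group Q] {n : ℕ} : MulAction Q (Colour Q n) where
  smul q w := ⟨w.label, w.support, fun i ↦ if i ∈ w.support then q • w.coset i else w.coset i⟩
  one_smul w := Colour.ext rfl rfl <| funext fun i ↦ by
    change (if i ∈ w.support then (1 : Q) • w.coset i else w.coset i) = w.coset i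
    rw [one_smul, ite_self]
  mul_smul q r w := Colour.ext rfl rfl <| funext fun i ↦ by
    change (if i ∈ w.support then (q * r) • w.coset i else w.coset i) =
      if i ∈ w.support then q • (if i ∈ w.support then r • w.coset i else w.coset i)
      else (if i ∈ w.support then r • w.coset i else w.coset i)
    split_ifs
    · exact mul_smul q r _
    · rfl

instance {Q : Type u} [Group Q] [Finite Q] {n : ℕ} : Finite (Colour Q n) :=
  Finite.of_injective (fun w ↦ (w.label, w.support, w.coset)) fun w w' h ↦ by
    simp only [Prod.mk.injEq] at h
    exact Colour.ext h.1 h.2.1 h.2.2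

open scoped Classical in
theorem coset_smul {Q : Type u} [Group Q] {n : ℕ} (q : Q) (w : Colour Q n)
    (i : {D : Subgroup Q // D ≠ ⊤} × Bool) :
    (q • w).coset i = if i ∈ w.support then q • w.coset i else w.coset i := rfl

/-- Parity splits the colours into two invariant parts. -/
def IsOdd {Q : Type u} [Group Q] {n : ℕ} (w : Colour Q n) : Prop := Odd w.support.card

variable {Q : Type u} [CommGroup Q] {n : ℕ}

theorem smul_coset_eq_iff {D : Subgroup Q} {q : Q} (x : Q ⧸ D) : q • x = x ↔ q ∈ D := by
  obtain ⟨x, rfl⟩ := QuotientGroup.mk_surjective x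
  rw [MulAction.Quotient.smul_coe, eq_comm, QuotientGroup.eq, smul_eq_mul, mul_comm q,
    inv_mul_cancel_left]

theorem smul_eq_iff {q : Q} {w : Colour Q n} : q • w = w ↔ ∀ i ∈ w.support, q ∈ i.1.1 := by
  constructor
  · intro h i hi
    have hi' := congrFun (congrArg Colour.coset h) i
    rwa [coset_smul, if_pos hi, smul_coset_eq_iff] at hi'
  · intro h
    refine Colour.ext rfl rfl (funext fun i ↦ ?_)
    rw [coset_smul]
    split_ifs with hi
    · exact (smul_coset_eq_iff _).2 (h i hi)
    · rfl

theorem IsOdd.smul_ne {w : Colour Q n} (hw : w.IsOdd) {q : Q}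
    (hq : Subgroup.zpowers q = ⊤) : q • w ≠ w := by
  obtain ⟨i, hi⟩ := Finset.card_pos.1 hw.pos
  intro h
  exact i.1.2 (top_le_iff.1 (hq.ge.trans (Subgroup.zpowers_le.2 (smul_eq_iff.1 h i hi))))

theorem le_ncard_of_support [Finite Q] (T : Finset ({D : Subgroup Q // D ≠ ⊤} × Bool))
    {P : Colour Q n → Prop} (hP : ∀ w : Colour Q n, w.support = T → P w) :
    n ≤ {w | P w}.ncard := by
  let point (c : Fin (n + 1)) : Colour Q n := ⟨c, T, fun _ ↦ (1 : Q)⟩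
  have hinj : Function.Injective point := fun c c' h ↦ congrArg Colour.label h
  calc n ≤ Nat.card (Fin (n + 1)) := by simp
    _ = (Set.range point).ncard := by
      rw [← Set.image_univ, Set.ncard_image_of_injective _ hinj, Set.ncard_univ]
    _ ≤ {w | P w}.ncard :=
      Set.ncard_le_ncard (by rintro _ ⟨c, rfl⟩; exact hP _ rfl) (Set.toFinite _)

theorem le_ncard_even [Finite Q] (D : Subgroup Q) :
    n ≤ {w : Colour Q n | ¬ w.IsOdd ∧ ∀ q : Q, q • w = w ↔ q ∈ D}.ncard := by
  classical
  by_cases hD : D = ⊤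
  · refine le_ncard_of_support ∅ fun w hw ↦ ⟨?_, fun q ↦ ?_⟩
    · simp [IsOdd, hw]
    · simp [smul_eq_iff, hw, hD]
  · refine le_ncard_of_support {(⟨D, hD⟩, false), (⟨D, hD⟩, true)} fun w hw ↦ ⟨?_, fun q ↦ ?_⟩
    · rw [IsOdd, hw, Finset.card_pair (by simp)]
      decide
    · simp [smul_eq_iff, hw]

theorem le_ncard_odd [Finite Q] {D : Subgroup Q} (hD : D ≠ ⊤) :
    n ≤ {w : Colour Q n | w.IsOdd ∧ ∀ q : Q, q • w = w ↔ q ∈ D}.ncard := by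
  refine le_ncard_of_support {(⟨D, hD⟩, false)} fun w hw ↦ ⟨?_, fun q ↦ ?_⟩
  · simp [IsOdd, hw]
  · simp [smul_eq_iff, hw]

open scoped Classical in
/-- Adding `(D, false)` to the support, or removing it, changes the parity and commutes with the
action of `D`. -/
noncomputable def toggle {D : Subgroup Q} (hD : D ≠ ⊤) (w : Colour Q n) : Colour Q n :=
  ⟨w.label, symmDiff w.support {(⟨D, hD⟩, false)}, w.coset⟩

theorem toggle_involutive {D : Subgroup Q} (hD : D ≠ ⊤) :
    Function.Involutive (toggle hD : Colour Q n → Colour Q n) := by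
  classical
  refine fun w ↦ Colour.ext rfl (Finset.ext fun i ↦ ?_) rfl
  simp only [toggle, Finset.mem_symmDiff, Finset.mem_singleton]
  tauto

theorem isOdd_toggle {D : Subgroup Q} (hD : D ≠ ⊤) (w : Colour Q n) :
    (toggle hD w).IsOdd ↔ ¬ w.IsOdd := by
  classical
  by_cases h : (⟨D, hD⟩, false) ∈ w.support
  · have hsupp : (toggle hD w).support = w.support.erase (⟨D, hD⟩, false) := by
      ext i
      simp only [toggle, Finset.mem_symmDiff, Finset.mem_singleton, Finset.mem_erase]
      grind
    rw [IsOdd, IsOdd, hsupp, ← Finset.card_erase_add_one h, Nat.odd_add_one, not_not]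
  · have hsupp : (toggle hD w).support = insert (⟨D, hD⟩, false) w.support := by
      ext i
      simp only [toggle, Finset.mem_symmDiff, Finset.mem_singleton, Finset.mem_insert]
      grind
    rw [IsOdd, IsOdd, hsupp, Finset.card_insert_of_notMem h, Nat.odd_add_one]

theorem toggle_smul {D : Subgroup Q} (hD : D ≠ ⊤) {q : Q} (hq : q ∈ D) (w : Colour Q n) :
    toggle hD (q • w) = q • toggle hD w := by
  classical
  refine Colour.ext rfl rfl (funext fun i ↦ ?_)
  change (q • w).coset i = (q • toggle hD w).coset i
  rw [coset_smul, coset_smul]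
  by_cases hi : i = (⟨D, hD⟩, false)
  · subst hi
    simp only [toggle, (smul_coset_eq_iff _).2 hq, ite_self]
  · simp only [toggle, Finset.mem_symmDiff, Finset.mem_singleton, hi, not_false_eq_true, and_true,
      false_and, or_false]

end Colour

section ColourTransport

open MulAction

variable {G V S Q : Type*} [Group G] [MulAction G V] [MulAction G S] [CommGroup Q]

/-- The vertices whose stabilizer maps onto `Q` but fixes no point of `S`. -/
def IsOddVertex (ρ : G →* Q) (S : Type*) [MulAction G S] (v : V) : Prop :=
  (stabilizer G v).map ρ = ⊤ ∧ ∀ s : S, ¬ stabilizer G v ≤ stabilizer G s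

/-- The colours admitted at the vertex `v`. When `ρ g` generates `Q`, it fixes no odd colour, so an
element `g` fixing both `v` and a colour admitted at `v` must fix a point of `S`. -/
def fiber (ρ : G →* Q) (S : Type*) [MulAction G S] (n : ℕ) (v : V) : Set (Colour Q n) :=
  {w | w.IsOdd ↔ IsOddVertex ρ S v}

variable {ρ : G →* Q} {n : ℕ}

theorem isOddVertex_smul_iff (g : G) (v : V) :
    IsOddVertex ρ S (g • v) ↔ IsOddVertex ρ S v := by
  have hρ : ρ.comp (MulAut.conj g).toMonoidHom = ρ := by
    ext a
    simp
  rw [IsOddVertex, stabilizer_smul_eq_stabilizer_map_conj, Subgroup.map_map, hρ, IsOddVertex]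
  refine and_congr_right fun _ ↦ (MulAction.surjective g).forall.trans ?_
  simp only [stabilizer_smul_eq_stabilizer_map_conj,
    Subgroup.map_le_map_iff_of_injective (f := (MulAut.conj g).toMonoidHom)
      (MulAut.conj g).injective]

theorem isOddVertex_iff_of_map_stabilizer_eq_top (hρ : ∀ v : V, Set.InjOn ρ (stabilizer G v))
    {v w : V} (h : (stabilizer G (v, w)).map ρ = ⊤) :
    IsOddVertex ρ S v ↔ IsOddVertex ρ S w := by
  have hle : stabilizer G (v, w) ≤ stabilizer G v ∧ stabilizer G (v, w) ≤ stabilizer G w :=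
    ⟨fun g hg ↦ congrArg Prod.fst hg, fun g hg ↦ congrArg Prod.snd hg⟩
  have heq {u : V} (hu : stabilizer G (v, w) ≤ stabilizer G u) :
      stabilizer G u = stabilizer G (v, w) := by
    refine hu.antisymm' fun g hg ↦ ?_
    obtain ⟨a, ha, hag⟩ : ρ g ∈ (stabilizer G (v, w)).map ρ := h ▸ Subgroup.mem_top _
    exact hρ u (hu ha) hg hag ▸ ha
  rw [IsOddVertex, IsOddVertex, heq hle.1, heq hle.2]

theorem smul_mem_fiber_smul_iff (g : G) {w : Colour Q n} {v : V} :
    ρ g • w ∈ fiber ρ S n (g • v) ↔ w ∈ fiber ρ S n v :=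
  iff_congr Iff.rfl (isOddVertex_smul_iff g v)

theorem exists_smul_eq_of_smul_mem_fiber {g : G}
    (hg : Subgroup.zpowers (ρ g) = ⊤) {v : V} (hv : g • v = v) {w : Colour Q n}
    (hw : w ∈ fiber ρ S n v) (hgw : ρ g • w = w) : ∃ s : S, g • s = s := by
  have hmap : (stabilizer G v).map ρ = ⊤ := by
    rw [eq_top_iff, ← hg, Subgroup.zpowers_le]
    exact ⟨g, hv, rfl⟩
  by_contra! hs
  have hodd : IsOddVertex ρ S v := ⟨hmap, fun s h ↦ hs s (h hv)⟩
  exact (hw.2 hodd).smul_ne hg hgw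

theorem exists_embedding_fiber [Finite Q] (hρ : ∀ v : V, Set.InjOn ρ (stabilizer G v))
    {Z : Set S} (hZ : Z.Finite) (hZn : Z.ncard ≤ n) {v : V}
    (hZv : ∀ g ∈ stabilizer G v, ∀ s ∈ Z, g • s ∈ Z) :
    ∃ f : S → Colour Q n, Z.InjOn f ∧ Set.MapsTo f Z (fiber ρ S n v) ∧
      ∀ g ∈ stabilizer G v, ∀ s, f (g • s) = ρ g • f s := by
  let ρv : stabilizer G v →* Q := ρ.comp (stabilizer G v).subtype
  have hρv : Function.Injective ρv :=
    fun g g' h ↦ Subtype.ext (hρ v g.2 g'.2 h)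
  let _ : MulAction (stabilizer G v) (Colour Q n) := MulAction.compHom _ ρv
  have hcard (L : Subgroup (stabilizer G v)) : {s ∈ Z | stabilizer (stabilizer G v) s = L}.ncard ≤
      {w ∈ fiber ρ S n v | stabilizer (stabilizer G v) w = L}.ncard := by
    obtain hempty | ⟨s, -, hsL⟩ := {s ∈ Z | stabilizer (stabilizer G v) s = L}.eq_empty_or_nonempty
    · rw [hempty, Set.ncard_empty]
      exact Nat.zero_le _
    refine (Set.ncard_le_ncard (Set.sep_subset _ _) hZ).trans (hZn.trans ?_)
    have hst {w : Colour Q n} (hw : ∀ q : Q, q • w = w ↔ q ∈ L.map ρv) :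
        stabilizer (stabilizer G v) w = L := by
      ext g
      exact (hw (ρv g)).trans (Subgroup.mem_map_iff_mem hρv)
    by_cases hv : IsOddVertex ρ S v
    · have hL : L.map ρv ≠ ⊤ := by
        intro hL
        refine hv.2 s fun g hg ↦ ?_
        obtain ⟨g', hg', h⟩ : ρ g ∈ L.map ρv := hL ▸ Subgroup.mem_top _
        rw [← hsL, hρv (a₂ := ⟨g, hg⟩) h] at hg'
        exact hg'
      exact (Colour.le_ncard_odd hL).trans
        (Set.ncard_le_ncard (fun w hw ↦ ⟨iff_of_true hw.1 hv, hst hw.2⟩) (Set.toFinite _))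
    · exact (Colour.le_ncard_even (L.map ρv)).trans
        (Set.ncard_le_ncard (fun w hw ↦ ⟨iff_of_false hw.1 hv, hst hw.2⟩) (Set.toFinite _))
  obtain ⟨w₀, hw₀⟩ : ∃ w₀ : Colour Q n, ∀ q : Q, q • w₀ = w₀ :=
    ⟨⟨0, ∅, fun _ ↦ (1 : Q)⟩, fun q ↦ Colour.smul_eq_iff.2 (by simp)⟩
  obtain ⟨f, hf, hinj, hmaps, -⟩ := exists_equivariant_injOn_extension
    (A := stabilizer G v) hZ (fun g s hs ↦ hZv g g.2 s hs) (fun _ _ hw ↦ hw) hcard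
    (Set.empty_subset Z) (fun _ _ h ↦ h.elim) (β := fun _ ↦ w₀) (fun g _ ↦ (hw₀ (ρv g)).symm)
    (Set.injOn_empty _) (Set.mapsTo_empty _ _)
  exact ⟨f, hinj, hmaps, fun g hg s ↦ hf ⟨g, hg⟩ s⟩

theorem exists_colour_transport [Finite Q] (hρ : ∀ v : V, Set.InjOn ρ (stabilizer G v))
    {v w : V} {I : Set S} (hI : ∀ g ∈ stabilizer G (v, w), ∀ s ∈ I, g • s ∈ I)
    {i j : S → Colour Q n} (hi : ∀ g ∈ stabilizer G (v, w), ∀ s, i (g • s) = ρ g • i s)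
    (hj : ∀ g ∈ stabilizer G (v, w), ∀ s, j (g • s) = ρ g • j s)
    (hi_inj : I.InjOn i) (hj_inj : I.InjOn j) (hi_fiber : Set.MapsTo i I (fiber ρ S n v))
    (hj_fiber : Set.MapsTo j I (fiber ρ S n w)) :
    ∃ τ : Colour Q n → Colour Q n, Function.Bijective τ ∧
      (∀ g ∈ stabilizer G (v, w), ∀ x, τ (ρ g • x) = ρ g • τ x) ∧
      (∀ x, τ x ∈ fiber ρ S n w ↔ x ∈ fiber ρ S n v) ∧ ∀ s ∈ I, τ (i s) = j s := by
  let ρvw : stabilizer G (v, w) →* Q := ρ.comp (stabilizer G (v, w)).subtype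
  let _ : MulAction (stabilizer G (v, w)) (Colour Q n) := MulAction.compHom _ ρvw
  by_cases hvw : IsOddVertex ρ S v ↔ IsOddVertex ρ S w
  · have hfib : fiber ρ S n w = fiber ρ S n v := by simp only [fiber, hvw]
    rw [hfib] at hj_fiber ⊢
    obtain ⟨τ, hτ, hτA, hτB, hτI⟩ := exists_equivariant_bijective_extension
      (A := stabilizer G (v, w)) (fun g x ↦ Iff.rfl) (fun g ↦ hI g g.2) (fun g ↦ hi g g.2)
      (fun g ↦ hj g g.2) hi_inj hj_inj hi_fiber hj_fiber
    exact ⟨τ, hτ, fun g hg ↦ hτA ⟨g, hg⟩, hτB, hτI⟩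
  · have hD : (stabilizer G (v, w)).map ρ ≠ ⊤ :=
      mt (isOddVertex_iff_of_map_stabilizer_eq_top hρ) hvw
    have htoggle (x : Colour Q n) : x.toggle hD ∈ fiber ρ S n v ↔ x ∈ fiber ρ S n w := by
      simp only [fiber, Set.mem_ofPred_eq, Colour.isOdd_toggle]
      tauto
    obtain ⟨τ, hτ, hτA, hτB, hτI⟩ := exists_equivariant_bijective_extension
      (A := stabilizer G (v, w)) (j := Colour.toggle hD ∘ j) (fun g x ↦ Iff.rfl)
      (fun g ↦ hI g g.2) (fun g ↦ hi g g.2)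
      (fun g s ↦ (congrArg _ (hj g g.2 s)).trans (Colour.toggle_smul hD ⟨g, g.2, rfl⟩ _))
      hi_inj ((Colour.toggle_involutive hD).injective.comp_injOn hj_inj) hi_fiber
      (fun s hs ↦ (htoggle _).2 (hj_fiber hs))
    refine ⟨Colour.toggle hD ∘ τ, (Colour.toggle_involutive hD).bijective.comp hτ,
      fun g hg x ↦ ?_, fun x ↦ ?_, fun s hs ↦ ?_⟩
    · exact (congrArg _ (hτA ⟨g, hg⟩ x)).trans (Colour.toggle_smul hD ⟨g, hg, rfl⟩ _)
    · rw [← hτB, Function.comp_apply, ← htoggle, Colour.toggle_involutive hD]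
    · rw [Function.comp_apply, hτI s hs, Function.comp_apply, Colour.toggle_involutive hD]

theorem exists_equivariant_embedding [Finite Q] (hρ : ∀ v : V, Set.InjOn ρ (stabilizer G v))
    {Z : V → Set S} (hZ : ∀ v, (Z v).Finite) (hZn : ∀ v, (Z v).ncard ≤ n)
    (hZG : ∀ (g : G) v s, g • s ∈ Z (g • v) ↔ s ∈ Z v) :
    ∃ j : V → S → Colour Q n, (∀ v, (Z v).InjOn (j v)) ∧
      (∀ v, Set.MapsTo (j v) (Z v) (fiber ρ S n v)) ∧
      ∀ (g : G) v s, j (g • v) (g • s) = ρ g • j v s := by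
  let _ : MulAction G (Colour Q n) := MulAction.compHom _ ρ
  obtain ⟨j, hj, hjG⟩ := exists_equivariant_family (G := G)
    (P := fun v f ↦ (Z v).InjOn f ∧ Set.MapsTo f (Z v) (fiber ρ S n v))
    (by
      rintro g v f ⟨hinj, hmaps⟩
      have hinv {s : S} (hs : s ∈ Z (g • v)) : g⁻¹ • s ∈ Z v := by rwa [← hZG g, smul_inv_smul]
      exact ⟨fun s hs s' hs' h ↦ MulAction.injective g⁻¹
        (hinj (hinv hs) (hinv hs') (MulAction.injective g h)),
        fun s hs ↦ (smul_mem_fiber_smul_iff g).2 (hmaps (hinv hs))⟩)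
    (fun v ↦ by
      have hZv (g : G) (hg : g ∈ stabilizer G v) (s : S) (hs : s ∈ Z v) : g • s ∈ Z v := by
        simpa only [mem_stabilizer_iff.1 hg] using (hZG g v s).2 hs
      obtain ⟨f, hinj, hmaps, hf⟩ := exists_embedding_fiber hρ (hZ v) (hZn v) hZv
      exact ⟨f, ⟨hinj, hmaps⟩, fun g s ↦ hf g g.2 s⟩)
  exact ⟨j, fun v ↦ (hj v).1, fun v ↦ (hj v).2, hjG⟩

theorem exists_equivariant_transport [Finite Q] (hρ : ∀ v : V, Set.InjOn ρ (stabilizer G v))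
    {Z : V → Set S} (hZG : ∀ (g : G) v s, g • s ∈ Z (g • v) ↔ s ∈ Z v)
    {j : V → S → Colour Q n} (hinj : ∀ v, (Z v).InjOn (j v))
    (hmaps : ∀ v, Set.MapsTo (j v) (Z v) (fiber ρ S n v))
    (hj : ∀ (g : G) v s, j (g • v) (g • s) = ρ g • j v s) :
    ∃ t : V → V → Colour Q n → Colour Q n, (∀ v w, Function.Bijective (t v w)) ∧
      (∀ v w x, t v w x ∈ fiber ρ S n w ↔ x ∈ fiber ρ S n v) ∧
      (∀ v w, ∀ s ∈ Z v ∩ Z w, t v w (j v s) = j w s) ∧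
      ∀ (g : G) v w x, t (g • v) (g • w) (ρ g • x) = ρ g • t v w x := by
  let _ : MulAction G (Colour Q n) := MulAction.compHom _ ρ
  obtain ⟨t, ht, htG⟩ := exists_equivariant_family (G := G)
    (P := fun (b : V × V) (τ : Colour Q n → Colour Q n) ↦ Function.Bijective τ ∧
      (∀ x, τ x ∈ fiber ρ S n b.2 ↔ x ∈ fiber ρ S n b.1) ∧
      ∀ s ∈ Z b.1 ∩ Z b.2, τ (j b.1 s) = j b.2 s)
    (by
      rintro g ⟨v, w⟩ τ ⟨hbij, hfiber, hτ⟩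
      refine ⟨(MulAction.bijective g).comp (hbij.comp (MulAction.bijective g⁻¹)), fun x ↦ ?_,
        fun s hs ↦ ?_⟩
      · obtain ⟨x, rfl⟩ := MulAction.surjective g x
        simp only [inv_smul_smul]
        exact (smul_mem_fiber_smul_iff g).trans
          ((hfiber _).trans (smul_mem_fiber_smul_iff g).symm)
      · obtain ⟨s, rfl⟩ := MulAction.surjective g s
        have hs' : s ∈ Z v ∩ Z w := ⟨(hZG g v s).1 hs.1, (hZG g w s).1 hs.2⟩
        have hjg (u : V) : j (g • u) (g • s) = g • j u s := hj g u s
        simp only [Prod.smul_mk, hjg, inv_smul_smul, hτ s hs'])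
    (fun b ↦ by
      obtain ⟨v, w⟩ := b
      have hfix {g : G} (hg : g ∈ stabilizer G (v, w)) : g • v = v ∧ g • w = w := Prod.ext_iff.1 hg
      obtain ⟨τ, hbij, hA, hfiber, hτ⟩ := exists_colour_transport (I := Z v ∩ Z w) hρ
        (fun g hg s hs ↦ ⟨(hfix hg).1 ▸ (hZG g v s).2 hs.1, (hfix hg).2 ▸ (hZG g w s).2 hs.2⟩)
        (fun g hg s ↦ by rw [← hj, (hfix hg).1]) (fun g hg s ↦ by rw [← hj, (hfix hg).2])
        ((hinj v).mono Set.inter_subset_left) ((hinj w).mono Set.inter_subset_right)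
        (fun s hs ↦ hmaps v hs.1) (fun s hs ↦ hmaps w hs.2)
      exact ⟨τ, ⟨hbij, hfiber, hτ⟩, fun g x ↦ hA g g.2 x⟩)
  exact ⟨fun v w ↦ t (v, w), fun v w ↦ (ht (v, w)).1, fun v w ↦ (ht (v, w)).2.1,
    fun v w ↦ (ht (v, w)).2.2, fun g v w ↦ htG g (v, w)⟩

end ColourTransport

/-- A `G`-invariant orientation `E` of a tree; in particular `G` inverts no edge. -/
structure IsInvariantOrientedTree (G : Type*) {V : Type*} [Group G] [MulAction G V]
    (E : V → V → Prop) : Prop where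
  smul : ∀ (g : G) {v w}, E v w → E (g • v) (g • w)
  asymm : ∀ {v w}, E v w → ¬ E w v
  isTree : (SimpleGraph.fromRel E).IsTree

/-- A family of values over the vertices that is parallel for the transport maps `t` along the
oriented edges. -/
def IsParallel {V W : Type*} (E : V → V → Prop) (t : V → V → W → W) (p : V → W) : Prop :=
  ∀ v w, E v w → p w = t v w (p v)

section Sections

variable {V W : Type*}

theorem exists_parallel_of_isTree {X : SimpleGraph V} (hX : X.IsTree) {t : V → V → W → W}
    (ht : ∀ v w, X.Adj v w → Function.LeftInverse (t w v) (t v w)) (v₀ : V) (x : W) :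
    ∃ p : V → W, p v₀ = x ∧ IsParallel X.Adj t p := by
  classical
  choose path hpath huniq using hX.existsUnique_path
  let along {u v : V} (q : X.Walk u v) : W :=
    q.concatRec (motive := fun _ _ _ ↦ W) x fun {_ v w} _ _ y ↦ t v w y
  have hstep {v w : V} (h : X.Adj v w) (hv : v ∈ (path v₀ w).support) :
      along (path v₀ w) = t v w (along (path v₀ v)) := by
    rw [hX.isAcyclic.path_concat (hpath v₀ v) (hpath v₀ w) h hv]
    exact SimpleGraph.Walk.concatRec_concat _ _ _ _
  refine ⟨fun v ↦ along (path v₀ v), ?_, fun v w h ↦ ?_⟩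
  · change along (path v₀ v₀) = x
    rw [← huniq v₀ v₀ .nil SimpleGraph.Walk.IsPath.nil]
    exact SimpleGraph.Walk.concatRec_nil _ _ v₀
  · change along (path v₀ w) = t v w (along (path v₀ v))
    by_cases hv : v ∈ (path v₀ w).support
    · exact hstep h hv
    · have hw := hX.isAcyclic.mem_support_of_ne_mem_support_of_adj_of_isPath (hpath v₀ v)
        (hpath v₀ w) h hv
      rw [hstep h.symm hw, ht w v h.symm]

variable {G : Type*} [Group G] [MulAction G V] {E : V → V → Prop}

theorem IsInvariantOrientedTree.exists_parallel (hE : IsInvariantOrientedTree G E)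
    {t : V → V → W → W} (ht : ∀ v w, Function.Bijective (t v w)) (v₀ : V) (x : W) :
    ∃ p : V → W, p v₀ = x ∧ IsParallel E t p := by
  classical
  let e (v w : V) : W ≃ W := Equiv.ofBijective _ (ht v w)
  let t' (v w : V) : W → W := if E v w then e v w else (e w v).symm
  obtain ⟨p, hp, hpar⟩ := exists_parallel_of_isTree hE.isTree (t := t') (fun v w h ↦ by
    obtain hvw | hwv := h.2
    · simpa only [t', if_pos hvw, if_neg (hE.asymm hvw), Function.LeftInverse]
        using (e v w).symm_apply_apply
    · simpa only [t', if_pos hwv, if_neg (hE.asymm hwv), Function.LeftInverse]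
        using (e w v).apply_symm_apply) v₀ x
  refine ⟨p, hp, fun v w hvw ↦ ?_⟩
  have hne : v ≠ w := by
    rintro rfl
    exact hE.asymm hvw hvw
  rw [hpar v w ⟨hne, .inl hvw⟩]
  simp only [t', if_pos hvw]
  rfl

theorem IsInvariantOrientedTree.parallel_ext (hE : IsInvariantOrientedTree G E)
    {t : V → V → W → W} (ht : ∀ v w, Function.Injective (t v w)) {p q : V → W}
    (hp : IsParallel E t p) (hq : IsParallel E t q) {v₀ : V} (h : p v₀ = q v₀) : p = q := by
  funext v
  obtain ⟨c⟩ := hE.isTree.connected.preconnected v₀ v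
  induction c with
  | nil => exact h
  | cons hadj _ ih =>
    refine ih ?_
    obtain hvw | hwv := hadj.2
    · rw [hp _ _ hvw, hq _ _ hvw, h]
    · exact ht _ _ (by rw [← hp _ _ hwv, ← hq _ _ hwv, h])

end Sections

section Parallel

variable {G V W Q : Type*} [Group G] [MulAction G V] [Group Q] [MulAction Q W]
  {E : V → V → Prop} {t : V → V → W → W} {p : V → W}

/-- The action of `G` on parallel families, where `G` acts on the values through `ρ`. -/
abbrev parallelAction {ρ : G →* Q} (hE : ∀ (g : G) {v w}, E v w → E (g • v) (g • w))
    (ht : ∀ (g : G) v w x, t (g • v) (g • w) (ρ g • x) = ρ g • t v w x) :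
    MulAction G {p : V → W // IsParallel E t p} where
  smul g p := ⟨fun v ↦ ρ g • p.1 (g⁻¹ • v), fun v w hvw ↦ by
    beta_reduce
    rw [p.2 _ _ (hE g⁻¹ hvw), ← ht, smul_inv_smul, smul_inv_smul]⟩
  one_smul p := Subtype.ext <| funext fun v ↦ by
    change ρ 1 • p.1 ((1 : G)⁻¹ • v) = p.1 v
    rw [map_one, one_smul, inv_one, one_smul]
  mul_smul g h p := Subtype.ext <| funext fun v ↦ by
    change ρ (g * h) • p.1 ((g * h)⁻¹ • v) = ρ g • ρ h • p.1 (h⁻¹ • g⁻¹ • v)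
    rw [map_mul, mul_smul, mul_inv_rev, mul_smul]

theorem IsParallel.eq_of_walk (hp : IsParallel E t p) (ht : ∀ v w, Function.Injective (t v w))
    {T : Set V} {c : V → W} (hc : ∀ v ∈ T, ∀ w ∈ T, t v w (c v) = c w) {v w : V}
    (q : (SimpleGraph.fromRel E).Walk v w) (hq : ∀ u ∈ q.support, u ∈ T) (hv : p v = c v) :
    p w = c w := by
  induction q with
  | nil => exact hv
  | cons hadj q ih =>
    simp only [SimpleGraph.Walk.support_cons, List.mem_cons, forall_eq_or_imp] at hq
    have hT := hq.2 _ q.start_mem_support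
    refine ih hq.2 ?_
    obtain hvw | hwv := hadj.2
    · rw [hp _ _ hvw, hv, hc _ hq.1 _ hT]
    · exact ht _ _ (by rw [← hp _ _ hwv, hv, hc _ hT _ hq.1])

theorem IsInvariantOrientedTree.finite_parallel [Finite W] (hE : IsInvariantOrientedTree G E)
    (ht : ∀ v w, Function.Injective (t v w)) : Finite {p : V → W // IsParallel E t p} := by
  obtain ⟨v₀⟩ := hE.isTree.connected.nonempty
  exact Finite.of_injective (fun p ↦ p.1 v₀) fun p q h ↦
    Subtype.ext (hE.parallel_ext ht p.2 q.2 h)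

theorem IsInvariantOrientedTree.parallel_mem (hE : IsInvariantOrientedTree G E)
    (hp : IsParallel E t p) {B : V → Set W} (hB : ∀ v w x, t v w x ∈ B w ↔ x ∈ B v) {v₀ : V}
    (h : p v₀ ∈ B v₀) (v : V) : p v ∈ B v := by
  obtain ⟨c⟩ := hE.isTree.connected.preconnected v₀ v
  induction c with
  | nil => exact h
  | cons hadj _ ih =>
    refine ih ?_
    obtain hvw | hwv := hadj.2
    · rwa [hp _ _ hvw, hB]
    · rwa [← hB _ _ (p _), ← hp _ _ hwv]

end Parallel

section Elliptic

open MulAction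

variable {G V : Type*} [Group G] [MulAction G V]

theorem smul_mk_eq_iff {H : Subgroup G} {g k : G} : g • (k : G ⧸ H) = k ↔ k⁻¹ * g * k ∈ H := by
  rw [Quotient.smul_coe, eq_comm, QuotientGroup.eq, smul_eq_mul, mul_assoc]

/-- The cosets `kH` for which the translate `kT` passes through `v`. -/
def translatesThrough (H : Subgroup G) (T : Set V) (v : V) : Set (G ⧸ H) :=
  (fun k : G ↦ (k : G ⧸ H)) '' {k | k⁻¹ • v ∈ T}

variable {H : Subgroup G} {T : Set V}

theorem smul_mem_translatesThrough_iff (g : G) (v : V) (s : G ⧸ H) :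
    g • s ∈ translatesThrough H T (g • v) ↔ s ∈ translatesThrough H T v := by
  have h (a : G) {v : V} {s : G ⧸ H} :
      s ∈ translatesThrough H T v → a • s ∈ translatesThrough H T (a • v) := by
    rintro ⟨k, hk, rfl⟩
    refine ⟨a * k, ?_, rfl⟩
    simpa only [Set.mem_ofPred_eq, mul_inv_rev, mul_smul, inv_smul_smul] using hk
  refine ⟨fun hs ↦ ?_, h g⟩
  simpa only [inv_smul_smul] using h g⁻¹ hs

theorem translatesThrough_finite_ncard_le {Q : Type*} [Group Q] [Finite Q] {ρ : G →* Q}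
    (hρ : ∀ v : V, Set.InjOn ρ (stabilizer G v)) (hT : T.Finite) (v : V) :
    (translatesThrough H T v).Finite ∧
      (translatesThrough H T v).ncard ≤ (T ×ˢ (Set.univ : Set Q)).ncard := by
  have hfin : (T ×ˢ (Set.univ : Set Q)).Finite := hT.prod Set.finite_univ
  have hinj : Set.InjOn (fun k ↦ (k⁻¹ • v, ρ k)) {k : G | k⁻¹ • v ∈ T} := by
    intro k _ l _ h
    obtain ⟨hv, hkl⟩ := Prod.mk.injEq .. ▸ h
    have hfix : (l * k⁻¹) • v = v := by rw [mul_smul, hv, smul_inv_smul]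
    refine (mul_inv_eq_one.1 (hρ v hfix (one_mem _) ?_)).symm
    rw [map_mul, map_inv, hkl, mul_inv_cancel, map_one]
  have hmaps : Set.MapsTo (fun k ↦ (k⁻¹ • v, ρ k)) {k : G | k⁻¹ • v ∈ T} (T ×ˢ Set.univ) :=
    fun k hk ↦ ⟨hk, trivial⟩
  have hK := Set.Finite.of_injOn hmaps hinj hfin
  exact ⟨hK.image _, (Set.ncard_image_le hK).trans (Set.ncard_le_ncard_of_injOn _ hmaps hinj hfin)⟩

theorem exists_finite_support_walks {X : SimpleGraph V} (hX : X.Connected) {S : Set V}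
    (hS : S.Finite) (v₀ : V) :
    ∃ T : Set V, T.Finite ∧ v₀ ∈ T ∧ ∀ v ∈ S, ∃ q : X.Walk v₀ v, ∀ u ∈ q.support, u ∈ T := by
  let q (v : V) : X.Walk v₀ v := (hX.preconnected v₀ v).some
  refine ⟨insert v₀ (⋃ v ∈ S, {u | u ∈ (q v).support}), .insert _ (hS.biUnion fun v _ ↦
    List.finite_toSet _), Set.mem_insert .., fun v hv ↦ ⟨q v, fun u hu ↦ .inr ?_⟩⟩
  exact Set.mem_biUnion hv hu

/-- The parallel family that takes the colours of the trivial coset along a finite subtree spanned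
by generators of `H` is fixed by `H`, and its stabilizer has finite index. A conjugate of `g` in
this stabilizer fixes a colour over the vertex `v`, which forces `g` to fix a coset of `H`. -/
theorem conjSeparable_of_smul_eq {Q : Type u} [CommGroup Q] [Finite Q] {E : V → V → Prop}
    (hE : IsInvariantOrientedTree G E) {ρ : G →* Q}
    (hρ : ∀ v : V, Set.InjOn ρ (stabilizer G v)) (hH : H.FG) {g : G}
    (hg : Subgroup.zpowers (ρ g) = ⊤) {v : V} (hv : g • v = v) (hgH : ∀ a, a⁻¹ * g * a ∉ H) :
    ConjSeparable H g := by
  obtain ⟨A, rfl⟩ := hH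
  obtain ⟨T, hT, hvT, hwalk⟩ := exists_finite_support_walks hE.isTree.connected
    (A.finite_toSet.image fun a ↦ a⁻¹ • v) v
  have hZ := translatesThrough_finite_ncard_le (H := Subgroup.closure (A : Set G)) hρ hT
  obtain ⟨j, hinj, hmaps, hjG⟩ := exists_equivariant_embedding hρ (fun v ↦ (hZ v).1)
    (fun v ↦ (hZ v).2) smul_mem_translatesThrough_iff
  obtain ⟨t, hbij, hfiber, htj, htG⟩ :=
    exists_equivariant_transport hρ smul_mem_translatesThrough_iff hinj hmaps hjG
  have hone {u : V} (hu : u ∈ T) :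
      ((1 : G) : G ⧸ Subgroup.closure (A : Set G)) ∈ translatesThrough _ T u :=
    ⟨1, by simpa using hu, rfl⟩
  obtain ⟨p, hpv, hp⟩ := hE.exists_parallel hbij v (j v ((1 : G) : G ⧸ _))
  have ht (v w : V) := (hbij v w).injective
  let _ := parallelAction hE.smul htG
  have := hE.finite_parallel ht
  refine ⟨stabilizer G (⟨p, hp⟩ : {p // IsParallel E t p}), finiteIndex_stabilizer _,
    (Subgroup.closure_le _).2 fun a ha ↦ ?_, fun a ha ↦ ?_⟩
  · obtain ⟨q, hq⟩ := hwalk _ ⟨a, ha, rfl⟩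
    have hend := hp.eq_of_walk ht
      (fun v hv w hw ↦ htj v w _ ⟨hone hv, hone hw⟩) q hq hpv
    refine Subtype.ext (hE.parallel_ext ht (Subtype.property _) hp (v₀ := v) ?_)
    change ρ a • p (a⁻¹ • v) = p v
    rw [hend, ← hjG, smul_inv_smul, hpv,
      smul_mk_eq_iff.2 (by simpa using Subgroup.subset_closure ha)]
  · have hfix : ρ (a⁻¹ * g * a) • p ((a⁻¹ * g * a)⁻¹ • a⁻¹ • v) = p (a⁻¹ • v) :=
      congrFun (congrArg Subtype.val ha) _
    have hvfix : (a⁻¹ * g * a)⁻¹ • a⁻¹ • v = a⁻¹ • v := by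
      simp only [inv_smul_eq_iff, mul_smul, smul_inv_smul, hv]
    have hρa : ρ (a⁻¹ * g * a) = ρ g := by rw [map_mul, map_mul, map_inv, inv_mul_cancel_comm]
    rw [hvfix] at hfix
    obtain ⟨s, hs⟩ := exists_smul_eq_of_smul_mem_fiber (hρa ▸ hg) (inv_smul_eq_iff.1 hvfix).symm
      (hE.parallel_mem hp hfiber (hpv ▸ hmaps v (hone hvT)) _) hfix
    obtain ⟨k, rfl⟩ := QuotientGroup.mk_surjective s
    exact hgH (a * k) (by simpa [mul_assoc] using smul_mk_eq_iff.1 hs)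

end Elliptic

section Pocset

variable {P : Type*} [PartialOrder P] {c : P → P}

/-- A poset with complementation in which any two elements are nested, as are the half-trees
bounded by the oriented edges of a tree. -/
structure IsNestedPocset (c : P → P) : Prop where
  involutive : Function.Involutive c
  antitone : Antitone c
  not_compl_le : ∀ a, ¬ c a ≤ a
  nested : ∀ a b, a ≤ b ∨ a ≤ c b ∨ c a ≤ b ∨ b ≤ a

/-- The vertices of the tree dual to a nested pocset, a vertex being identified with the set of
half-trees that contain it. -/
structure IsPocVertex (c : P → P) (o : Set P) : Prop where
  isUpperSet : IsUpperSet o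
  compl_mem_iff : ∀ a, c a ∈ o ↔ a ∉ o
  finite_le : ∀ a ∈ o, {b ∈ o | b ≤ a}.Finite

namespace IsPocVertex

variable {o p : Set P} {a : P}

theorem compl_mem_sdiff_iff (ho : IsPocVertex c o) (hp : IsPocVertex c p) :
    c a ∈ p \ o ↔ a ∈ o \ p := by
  rw [Set.mem_sdiff, Set.mem_sdiff, hp.compl_mem_iff, ho.compl_mem_iff, not_not, and_comm]

theorem sdiff_eq_image_compl (hc : IsNestedPocset c) (ho : IsPocVertex c o) (hp : IsPocVertex c p) :
    (o \ p) = c '' (p \ o) := by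
  ext a
  constructor
  · exact fun ha ↦ ⟨c a, (compl_mem_sdiff_iff ho hp).2 ha, hc.involutive a⟩
  · rintro ⟨b, hb, rfl⟩
    exact (compl_mem_sdiff_iff hp ho).2 hb

theorem eq_of_subset (ho : IsPocVertex c o) (hp : IsPocVertex c p) (h : o ⊆ p) : o = p := by
  refine h.antisymm fun a ha ↦ ?_
  by_contra hao
  exact (hp.compl_mem_iff a).1 (h ((ho.compl_mem_iff a).2 hao)) ha

theorem sdiff_total (hc : IsNestedPocset c) (ho : IsPocVertex c o) (hp : IsPocVertex c p) {a b : P}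
    (ha : a ∈ o \ p) (hb : b ∈ o \ p) : a ≤ b ∨ b ≤ a := by
  obtain h | h | h | h := hc.nested a b
  · exact .inl h
  · exact absurd hb.1 ((ho.compl_mem_iff b).1 (ho.isUpperSet h ha.1))
  · exact absurd (hp.isUpperSet h ((hp.compl_mem_iff a).2 ha.2)) hb.2
  · exact .inr h

theorem finite_sdiff (hc : IsNestedPocset c) (ho : IsPocVertex c o) (hp : IsPocVertex c p) :
    (o \ p).Finite := by
  obtain h | ⟨a, ha⟩ := (o \ p).eq_empty_or_nonempty
  · exact h ▸ Set.finite_empty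
  · refine ((ho.finite_le a ha.1).union
      ((hp.finite_le (c a) ((hp.compl_mem_iff a).2 ha.2)).image c)).subset fun b hb ↦ ?_
    obtain h | h := sdiff_total hc ho hp ha hb
    · exact .inr ⟨c b, ⟨(hp.compl_mem_iff b).2 hb.2, hc.antitone h⟩, hc.involutive b⟩
    · exact .inl ⟨hb.1, h⟩

theorem minimal_of_sdiff (hp : IsPocVertex c p) (ha : Minimal (· ∈ o \ p) a) :
    Minimal (· ∈ o) a :=
  ⟨ha.prop.1, fun _ hb hba ↦
    ha.le_of_le ⟨hb, fun hbp ↦ ha.prop.2 (hp.isUpperSet hba hbp)⟩ hba⟩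

theorem eq_of_minimal (hc : IsNestedPocset c) (ho : IsPocVertex c o) (hp : IsPocVertex c p)
    (hao : Minimal (· ∈ o) a) (hap : Minimal (· ∈ p) a) : o = p := by
  refine eq_of_subset ho hp fun b hb ↦ ?_
  obtain h | h | h | h := hc.nested a b
  · exact hp.isUpperSet h hap.prop
  · exact absurd hb ((ho.compl_mem_iff b).1 (ho.isUpperSet h hao.prop))
  · by_contra hbp
    have hcb : c b ≤ a := by simpa only [hc.involutive a] using hc.antitone h
    have hca := hap.eq_of_le ((hp.compl_mem_iff b).2 hbp) hcb
    exact (ho.compl_mem_iff b).1 (hca ▸ hao.prop) hb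
  · exact hao.eq_of_le hb h ▸ hap.prop

theorem flip (hc : IsNestedPocset c) (ho : IsPocVertex c o) (ha : Minimal (· ∈ o) a) :
    IsPocVertex c (insert (c a) (o \ {a})) where
  isUpperSet := by
    rintro x y hxy (rfl | ⟨hx, hxa⟩)
    · by_cases hy : y ∈ o
      · exact .inr ⟨hy, fun hya ↦ hc.not_compl_le a (hxy.trans_eq hya)⟩
      · have hya : c y ≤ a := by simpa only [hc.involutive a] using hc.antitone hxy
        exact .inl (by rw [← ha.eq_of_le ((ho.compl_mem_iff y).2 hy) hya, hc.involutive])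
    · refine .inr ⟨ho.isUpperSet hxy hx, ?_⟩
      rintro rfl
      exact hxa (ha.eq_of_le hx hxy)
  compl_mem_iff b := by
    have hne : c a ≠ a := fun h ↦ hc.not_compl_le a h.le
    by_cases hba : b = a
    · subst hba
      simp [hne.symm]
    by_cases hbc : c b = a
    · subst hbc
      simp [hc.involutive b, Ne.symm hba]
    · have hbca : b ≠ c a := fun h ↦ hbc (h ▸ hc.involutive a)
      simp [hba, hbc, hbca, hc.involutive.injective.eq_iff, ho.compl_mem_iff]
  finite_le b hb := by
    obtain rfl | ⟨hbo, -⟩ := hb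
    · refine (Set.finite_singleton (c a)).subset fun d hd ↦ hd.1.resolve_right fun hdo ↦ ?_
      have had : a ≤ c d := by simpa only [hc.involutive a] using hc.antitone hd.2
      exact (ho.compl_mem_iff d).1 (ho.isUpperSet had ha.prop) hdo.1
    · refine ((ho.finite_le b hbo).insert (c a)).subset fun d hd ↦ hd.1.imp id fun hdo ↦ ?_
      exact ⟨hdo.1, hd.2⟩

theorem sdiff_flip (ho : IsPocVertex c o) (ha : a ∈ o) :
    o \ insert (c a) (o \ {a}) = {a} := by
  ext b
  have hca : b ∈ o → b ≠ c a := by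
    rintro hb rfl
    exact (ho.compl_mem_iff a).1 hb ha
  simp only [Set.mem_sdiff, Set.mem_insert_iff, Set.mem_singleton_iff]
  constructor
  · tauto
  · rintro rfl
    exact ⟨ha, fun h ↦ h.elim (hca ha) fun h ↦ h.2 rfl⟩

theorem flip_sdiff (hp : IsPocVertex c p) (ha : a ∈ o \ p) :
    insert (c a) (o \ {a}) \ p = (o \ p) \ {a} := by
  rw [Set.insert_sdiff_of_mem _ ((hp.compl_mem_iff a).2 ha.2), Set.sdiff_sdiff_comm]

end IsPocVertex

section Tree

variable (c) in
/-- The vertices of the tree dual to a nested pocset. -/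
abbrev PocVertex : Type _ := {o : Set P // IsPocVertex c o}

/-- Two vertices are joined by an edge when a single half-tree separates them; the edge points
out of the positive half-tree. -/
def PocEdge (pos : P → Prop) (o p : PocVertex c) : Prop := ∃ a, pos a ∧ o.1 \ p.1 = {a}

variable {pos : P → Prop}

theorem IsNestedPocset.sdiff_eq_singleton_comm (hc : IsNestedPocset c) {o p : PocVertex c} {a : P} :
    o.1 \ p.1 = {a} ↔ p.1 \ o.1 = {c a} := by
  have ha : ({a} : Set P) = c '' {c a} := by rw [Set.image_singleton, hc.involutive a]
  rw [IsPocVertex.sdiff_eq_image_compl hc o.2 p.2, ha,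
    hc.involutive.injective.image_injective.eq_iff]

theorem IsNestedPocset.pocEdge_asymm (hc : IsNestedPocset c) (hpos : ∀ a, pos (c a) ↔ ¬ pos a)
    {o p : PocVertex c} (h : PocEdge pos o p) : ¬ PocEdge pos p o := by
  rintro ⟨b, hb, hpo⟩
  obtain ⟨a, ha, hop⟩ := h
  rw [hc.sdiff_eq_singleton_comm.1 hop, Set.singleton_eq_singleton_iff] at hpo
  exact (hpos a).1 (hpo ▸ hb) ha

theorem IsNestedPocset.adj_iff (hc : IsNestedPocset c) (hpos : ∀ a, pos (c a) ↔ ¬ pos a)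
    {o p : PocVertex c} :
    (SimpleGraph.fromRel (PocEdge pos)).Adj o p ↔ ∃ a, o.1 \ p.1 = {a} := by
  constructor
  · rintro ⟨-, ⟨a, -, ha⟩ | ⟨a, -, ha⟩⟩
    · exact ⟨a, ha⟩
    · exact ⟨c a, hc.sdiff_eq_singleton_comm.1 ha⟩
  · rintro ⟨a, ha⟩
    refine ⟨?_, ?_⟩
    · rintro rfl
      simp at ha
    · by_cases h : pos a
      · exact .inl ⟨a, h, ha⟩
      · exact .inr ⟨c a, (hpos a).2 h, hc.sdiff_eq_singleton_comm.1 ha⟩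

theorem IsPocVertex.exists_minimal_sdiff (hc : IsNestedPocset c) {o p : PocVertex c} (h : o ≠ p) :
    ∃ a, Minimal (· ∈ o.1 \ p.1) a := by
  refine (finite_sdiff hc o.2 p.2).exists_minimal (Set.nonempty_iff_ne_empty.2 fun he ↦ h ?_)
  exact Subtype.ext (o.2.eq_of_subset p.2 (Set.sdiff_eq_empty.1 he))

theorem IsNestedPocset.connected [Nonempty (PocVertex c)] (hc : IsNestedPocset c)
    (hpos : ∀ a, pos (c a) ↔ ¬ pos a) :
    (SimpleGraph.fromRel (PocEdge (c := c) pos)).Connected := by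
  refine ⟨fun o p ↦ ?_⟩
  induction h : (o.1 \ p.1).ncard using Nat.strong_induction_on generalizing o with
  | _ n ih =>
    obtain rfl | hop := eq_or_ne o p
    · rfl
    obtain ⟨a, ha⟩ := IsPocVertex.exists_minimal_sdiff hc hop
    let q : PocVertex c := ⟨_, o.2.flip hc (p.2.minimal_of_sdiff ha)⟩
    have hadj : (SimpleGraph.fromRel (PocEdge pos)).Adj o q :=
      (hc.adj_iff hpos).2 ⟨a, o.2.sdiff_flip ha.prop.1⟩
    refine hadj.reachable.trans (ih _ ?_ q rfl)
    rw [← h, p.2.flip_sdiff ha.prop]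
    exact Set.ncard_sdiff_singleton_lt_of_mem ha.prop (IsPocVertex.finite_sdiff hc o.2 p.2)

/-- Only one edge leaves the half-tree `a`, since its end in `a` is the unique vertex in which `a`
is minimal. -/
theorem IsNestedPocset.eq_of_sdiff_eq (hc : IsNestedPocset c) {o p o' p' : PocVertex c} {a : P}
    (h : o.1 \ p.1 = {a}) (h' : o'.1 \ p'.1 = {a}) : o = o' := by
  have hmin {x y : PocVertex c} (h : x.1 \ y.1 = {a}) : Minimal (· ∈ x.1) a :=
    y.2.minimal_of_sdiff (by simp [h])
  exact Subtype.ext (o.2.eq_of_minimal hc o'.2 (hmin h) (hmin h'))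

theorem IsNestedPocset.isAcyclic (hc : IsNestedPocset c) (hpos : ∀ a, pos (c a) ↔ ¬ pos a) :
    (SimpleGraph.fromRel (PocEdge (c := c) pos)).IsAcyclic := by
  refine SimpleGraph.isAcyclic_iff_forall_adj_isBridge.2 fun o p hadj ↦ ?_
  obtain ⟨a, ha⟩ := (hc.adj_iff hpos).1 hadj
  rw [SimpleGraph.isBridge_iff]
  rintro ⟨w⟩
  have hoa : a ∈ o.1 \ p.1 := ha ▸ rfl
  suffices h : ∀ {x y : PocVertex c},
      ((SimpleGraph.fromRel (PocEdge pos)).deleteEdges {s(o, p)}).Walk x y → a ∈ x.1 → a ∈ y.1 from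
    hoa.2 (h w hoa.1)
  intro x y w
  induction w with
  | nil => exact id
  | @cons x y _ hxy _ ih =>
    refine fun hax ↦ ih ?_
    by_contra hay
    obtain ⟨hxy, hne⟩ := SimpleGraph.deleteEdges_adj.1 hxy
    obtain ⟨b, hb⟩ := (hc.adj_iff hpos).1 hxy
    obtain rfl : a = b := hb.subset ⟨hax, hay⟩
    refine hne ?_
    rw [hc.eq_of_sdiff_eq hb ha, hc.eq_of_sdiff_eq (hc.sdiff_eq_singleton_comm.1 hb)
      (hc.sdiff_eq_singleton_comm.1 ha)]
    rfl

end Tree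

end Pocset

section PocAction

open scoped Pointwise

variable {G P : Type*} [Group G] [PartialOrder P] [MulAction G P] {c : P → P} {pos : P → Prop}

/-- A nested pocset with an action of `G` and an invariant choice `pos` of one half-tree at each
edge; the latter prevents `G` from inverting edges of the dual tree. -/
structure IsPocAction (G : Type*) {P : Type*} [Group G] [PartialOrder P] [MulAction G P]
    (c : P → P) (pos : P → Prop) : Prop where
  pocset : IsNestedPocset c
  pos_compl : ∀ a, pos (c a) ↔ ¬ pos a
  smul_le : ∀ (g : G) {a b : P}, a ≤ b → g • a ≤ g • b
  smul_compl : ∀ (g : G) a, g • c a = c (g • a)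
  pos_smul : ∀ (g : G) a, pos (g • a) ↔ pos a

namespace IsPocAction

variable (h : IsPocAction G c pos)

include h

theorem strictMono (g : G) : StrictMono (g • · : P → P) :=
  Monotone.strictMono_of_injective (fun _ _ ↦ h.smul_le g) (MulAction.injective g)

theorem isPocVertex_smul (g : G) {o : Set P} (ho : IsPocVertex c o) : IsPocVertex c (g • o) where
  isUpperSet a b hab ha := by
    rw [Set.mem_smul_set_iff_inv_smul_mem] at ha ⊢
    exact ho.isUpperSet (h.smul_le _ hab) ha
  compl_mem_iff a := by
    simp only [Set.mem_smul_set_iff_inv_smul_mem, h.smul_compl, ho.compl_mem_iff]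
  finite_le a ha := by
    rw [Set.mem_smul_set_iff_inv_smul_mem] at ha
    refine ((ho.finite_le _ ha).smul_set (a := g)).subset fun b hb ↦ ?_
    rw [Set.mem_smul_set_iff_inv_smul_mem]
    exact ⟨Set.mem_smul_set_iff_inv_smul_mem.1 hb.1, h.smul_le _ hb.2⟩

/-- The action of `G` on the tree dual to a nested pocset. -/
abbrev vertexAction : MulAction G (PocVertex c) where
  smul g o := ⟨g • o.1, h.isPocVertex_smul g o.2⟩
  one_smul o := Subtype.ext (one_smul G o.1)
  mul_smul g k o := Subtype.ext (mul_smul g k o.1)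

theorem isInvariantOrientedTree [Nonempty (PocVertex c)] :
    letI := h.vertexAction
    IsInvariantOrientedTree G (PocEdge (c := c) pos) := by
  let _ := h.vertexAction
  refine ⟨fun g o p ⟨a, ha, hop⟩ ↦ ⟨g • a, (h.pos_smul g a).2 ha, ?_⟩,
    h.pocset.pocEdge_asymm h.pos_compl,
    ⟨h.pocset.connected h.pos_compl, h.pocset.isAcyclic h.pos_compl⟩⟩
  change g • o.1 \ g • p.1 = {g • a}
  rw [← Set.smul_set_sdiff, hop, Set.smul_set_singleton]

theorem not_lt_smul {g : G} (hg : IsOfFinOrder g) (a : P) : ¬ a < g • a := by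
  intro ha
  have hmono := (h.strictMono g).strictMono_iterate_of_lt_map ha
  have := hmono hg.orderOf_pos
  simp only [smul_iterate, pow_orderOf_eq_one, one_smul, pow_zero, lt_self_iff_false] at this

theorem smul_ne_of_smul_lt {g : G} {o : Set P} (ho : IsPocVertex c o) {a : P} (ha : a ∈ o)
    (hlt : g • a < a) : g • o ≠ o := by
  intro hgo
  have hanti := (h.strictMono g).strictAnti_iterate_of_map_lt hlt
  refine (Set.infinite_range_of_injective hanti.injective).mono ?_ (ho.finite_le a ha)
  rintro _ ⟨n, rfl⟩
  refine ⟨?_, hanti.antitone n.zero_le⟩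
  induction n with
  | zero => exact ha
  | succ n ih =>
    simp only [Function.iterate_succ_apply']
    exact hgo.subset (Set.smul_mem_smul_set ih)

theorem smul_ne_of_lt_smul {g : G} {o : Set P} (ho : IsPocVertex c o) {a : P}
    (hlt : a < g • a) : g • o ≠ o := by
  by_cases ha : a ∈ o
  · have hinv : g⁻¹ • a < a := by simpa only [inv_smul_smul] using h.strictMono g⁻¹ hlt
    intro hgo
    exact h.smul_ne_of_smul_lt ho ha hinv (inv_smul_eq_iff.2 hgo.symm)
  · refine h.smul_ne_of_smul_lt ho ((ho.compl_mem_iff a).2 ha) ?_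
    rw [h.smul_compl]
    exact h.pocset.antitone.strictAnti_of_injective h.pocset.involutive.injective hlt

/-- The half-trees of `o \ g • o` form a chain from `a` to `b`; if `g • a` were not `c b`, then
nestedness would leave only `a ≤ b ≤ g • a`. -/
theorem smul_eq_compl_of_isOfFinOrder {g : G} (hg : IsOfFinOrder g) {o : Set P}
    (ho : IsPocVertex c o) {a b : P} (ha : Minimal (· ∈ o \ g • o) a)
    (hb : Minimal (· ∈ g • o \ o) (c b)) : g • a = c b := by
  have hgo := h.isPocVertex_smul g ho
  have hga : g • a ∈ g • o := Set.smul_mem_smul_set ha.prop.1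
  have hbD : b ∈ o \ g • o := (ho.compl_mem_sdiff_iff hgo).1 hb.prop
  by_contra hne
  obtain hle | hle | hle | hle := h.pocset.nested (g • a) b
  · exact hbD.2 (hgo.isUpperSet hle hga)
  · exact hne ((ho.minimal_of_sdiff hb).eq_of_le hga hle)
  · have hle' : c b ≤ g • a := by
      simpa only [h.pocset.involutive (g • a)] using h.pocset.antitone hle
    obtain ⟨x, hx, hxb⟩ := hb.prop.1
    have hxa : x ≤ a := by
      simpa only [inv_smul_smul] using h.smul_le g⁻¹ (hxb.trans_le hle')
    exact hne (by rw [← hxb, (hgo.minimal_of_sdiff ha).eq_of_le hx hxa])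
  · have hab : a ≤ b := (ho.sdiff_total h.pocset hgo ha.prop hbD).elim id (ha.le_of_le hbD)
    refine h.not_lt_smul hg a ((hab.trans hle).lt_of_ne fun heq ↦ ha.prop.2 ?_)
    exact heq ▸ hga

theorem flip_sdiff_smul_subset {g : G} {o : Set P} {a b : P} (ho : IsPocVertex c o)
    (ha : a ∈ o \ g • o) (hb : b ∈ o \ g • o) (hab : g • a = c b) :
    insert (c a) (o \ {a}) \ g • insert (c a) (o \ {a}) ⊆ (o \ g • o) \ {a} := by
  rw [← Set.image_smul, Set.image_insert_eq, Set.image_smul, Set.smul_set_sdiff,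
    Set.smul_set_singleton, h.smul_compl, hab, h.pocset.involutive]
  rintro x ⟨rfl | ⟨hxo, hxa⟩, hx⟩
  · have hca : c a ∈ g • o := ((h.isPocVertex_smul g ho).compl_mem_iff a).2 ha.2
    have heq : a = b := by
      by_contra hne
      exact hx (.inr ⟨hca, fun heq ↦ hne (h.pocset.involutive.injective heq)⟩)
    have hpos := h.pos_smul g a
    rw [hab, ← heq, h.pos_compl] at hpos
    exact absurd hpos (not_iff_self (a := pos a))
  · refine ⟨⟨hxo, fun hxg ↦ hx (.inr ⟨hxg, ?_⟩)⟩, hxa⟩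
    rintro rfl
    exact (ho.compl_mem_iff b).1 hxo hb.1

/-- A vertex moved by `g` as little as possible is fixed, for otherwise moving it across the first
edge towards its image would bring it closer to its image. -/
theorem exists_smul_eq [Nonempty (PocVertex c)] {g : G} (hg : IsOfFinOrder g) :
    ∃ o : Set P, IsPocVertex c o ∧ g • o = o := by
  let displacement (o : PocVertex c) : ℕ := (o.1 \ g • o.1).ncard
  obtain ⟨o, ho⟩ : ∃ o, ∀ p, displacement o ≤ displacement p :=
    ⟨Function.argmin displacement, fun p ↦ Function.argmin_le displacement p⟩
  refine ⟨o.1, o.2, ?_⟩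
  let go : PocVertex c := ⟨g • o.1, h.isPocVertex_smul g o.2⟩
  by_contra hne
  obtain ⟨a, ha⟩ := IsPocVertex.exists_minimal_sdiff h.pocset (o := o) (p := go)
    fun heq ↦ hne (congrArg Subtype.val heq).symm
  obtain ⟨d, hb⟩ := IsPocVertex.exists_minimal_sdiff h.pocset (o := go) (p := o)
    fun heq ↦ hne (congrArg Subtype.val heq)
  obtain ⟨b, rfl⟩ := h.pocset.involutive.surjective d
  have hab := h.smul_eq_compl_of_isOfFinOrder hg o.2 ha hb
  have hbD := (o.2.compl_mem_sdiff_iff go.2).1 hb.prop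
  have hlt : displacement ⟨_, o.2.flip h.pocset (go.2.minimal_of_sdiff ha)⟩ < displacement o :=
    have hfin : (o.1 \ g • o.1).Finite := o.2.finite_sdiff h.pocset go.2
    (Set.ncard_le_ncard (h.flip_sdiff_smul_subset o.2 ha.prop hbD hab) hfin.sdiff).trans_lt
      (Set.ncard_sdiff_singleton_lt_of_mem ha.prop hfin)
  exact (ho _).not_gt hlt

end IsPocAction

end PocAction

section Subdivision

variable {G P : Type*} [Group G] [PartialOrder P] [MulAction G P] {c : P → P}

/-- The half-trees of the barycentric subdivision: each half-tree of `P` becomes a chain of two. -/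
def Subdivision (P : Type*) : Type _ := P ×ₗ Bool

namespace Subdivision

instance : PartialOrder (Subdivision P) := inferInstanceAs (PartialOrder (P ×ₗ Bool))

instance : MulAction G (Subdivision P) where
  smul g a := toLex (g • (ofLex a).1, (ofLex a).2)
  one_smul a := congrArg (fun b ↦ toLex (b, (ofLex a).2)) (one_smul G (ofLex a).1)
  mul_smul g k a := congrArg (fun b ↦ toLex (b, (ofLex a).2)) (mul_smul g k (ofLex a).1)

/-- The complementation induced on the half-trees of the subdivision. -/
def compl (c : P → P) (a : Subdivision P) : Subdivision P :=
  toLex (c (ofLex a).1, !(ofLex a).2)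

theorem le_iff {a b : P} {i j : Bool} :
    (toLex (a, i) : Subdivision P) ≤ toLex (b, j) ↔ a < b ∨ a = b ∧ i ≤ j :=
  Prod.Lex.toLex_le_toLex

theorem _root_.IsNestedPocset.subdivision (hc : IsNestedPocset c) :
    IsNestedPocset (Subdivision.compl c) where
  involutive a := by
    change toLex (c (c (ofLex a).1), !!(ofLex a).2) = a
    rw [hc.involutive, Bool.not_not]
    rfl
  antitone := by
    rintro ⟨a, i⟩ ⟨b, j⟩ h
    obtain h | ⟨rfl, hij⟩ := le_iff.1 h
    · exact le_iff.2 (.inl (hc.antitone.strictAnti_of_injective hc.involutive.injective h))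
    · exact le_iff.2 (.inr ⟨rfl, compl_le_compl hij⟩)
  not_compl_le := by
    rintro ⟨a, i⟩ h
    obtain h | ⟨h, -⟩ := le_iff.1 h
    exacts [hc.not_compl_le a h.le, hc.not_compl_le a h.le]
  nested := by
    rintro ⟨a, i⟩ ⟨b, j⟩
    obtain h | h | h | h := hc.nested a b <;> obtain h | rfl := h.lt_or_eq
    · exact .inl (le_iff.2 (.inl h))
    · exact (le_total i j).imp (fun hij ↦ le_iff.2 (.inr ⟨rfl, hij⟩))
        fun hji ↦ .inr (.inr (le_iff.2 (.inr ⟨rfl, hji⟩)))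
    · exact .inr (.inl (le_iff.2 (.inl h)))
    · refine .inr ((le_total i (!j)).imp (fun hij ↦ le_iff.2 (.inr ⟨rfl, hij⟩))
        fun hji ↦ .inl (le_iff.2 (.inr ⟨hc.involutive b, ?_⟩)))
      exact compl_le_iff_compl_le.1 hji
    · exact .inr (.inr (.inl (le_iff.2 (.inl h))))
    · refine .inr ((le_total i (!j)).imp
        (fun hij ↦ le_iff.2 (.inr ⟨(hc.involutive a).symm, hij⟩))
        fun hji ↦ .inl (le_iff.2 (.inr ⟨rfl, ?_⟩)))
      exact compl_le_iff_compl_le.1 hji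
    · exact .inr (.inr (.inr (le_iff.2 (.inl h))))
    · exact (le_total i j).imp (fun hij ↦ le_iff.2 (.inr ⟨rfl, hij⟩))
        fun hji ↦ .inr (.inr (le_iff.2 (.inr ⟨rfl, hji⟩)))

theorem _root_.IsNestedPocset.isPocAction_subdivision (hc : IsNestedPocset c)
    (hle : ∀ (g : G) {a b : P}, a ≤ b → g • a ≤ g • b) (hsmul : ∀ (g : G) a, g • c a = c (g • a)) :
    IsPocAction G (Subdivision.compl c) fun a ↦ (ofLex a).2 = false where
  pocset := hc.subdivision
  pos_compl a := by
    change (!(ofLex a).2) = false ↔ _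
    simp
  smul_le := by
    rintro g ⟨a, i⟩ ⟨b, j⟩ h
    obtain h | ⟨rfl, hij⟩ := le_iff.1 h
    · exact le_iff.2 (.inl ((hle g h.le).lt_of_ne ((MulAction.injective g).ne h.ne)))
    · exact le_iff.2 (.inr ⟨rfl, hij⟩)
  smul_compl g a := congrArg (fun b ↦ toLex (b, !(ofLex a).2)) (hsmul g (ofLex a).1)
  pos_smul _ _ := Iff.rfl

theorem _root_.IsPocVertex.subdivision {o : Set P} (ho : IsPocVertex c o) :
    IsPocVertex (Subdivision.compl c) {a | (ofLex a).1 ∈ o} where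
  isUpperSet := by
    rintro ⟨a, i⟩ ⟨b, j⟩ h ha
    obtain h | ⟨rfl, -⟩ := le_iff.1 h
    exacts [ho.isUpperSet h.le ha, ha]
  compl_mem_iff a := ho.compl_mem_iff _
  finite_le := by
    rintro ⟨a, i⟩ ha
    refine ((ho.finite_le a ha).prod (Set.finite_univ (α := Bool))).subset ?_
    rintro ⟨b, j⟩ ⟨hb, hba⟩
    refine ⟨⟨hb, ?_⟩, Set.mem_univ _⟩
    obtain h | ⟨rfl, -⟩ := le_iff.1 hba
    exacts [h.le, le_rfl]

end Subdivision

end Subdivision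

section NestedFamily

open scoped Pointwise

variable {G X : Type*} [Group G] [MulAction G X] {S : Set (Set X)}

/-- A `G`-invariant family of pairwise nested subsets of `X` such that finitely many of them
separate any two points. -/
structure IsNestedFamily (G : Type*) {X : Type*} [Group G] [MulAction G X]
    (S : Set (Set X)) : Prop where
  nonempty : ∀ A ∈ S, A.Nonempty
  compl_mem : ∀ A ∈ S, Aᶜ ∈ S
  smul_mem : ∀ (g : G), ∀ A ∈ S, g • A ∈ S
  nested : ∀ A ∈ S, ∀ B ∈ S, A ⊆ B ∨ A ⊆ Bᶜ ∨ Aᶜ ⊆ B ∨ B ⊆ A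
  finite_separating : ∀ x y, {A ∈ S | x ∈ A ∧ y ∉ A}.Finite

namespace IsNestedFamily

variable (hS : IsNestedFamily G S)

include hS

/-- The action of `G` on the members of an invariant family. -/
abbrev action : MulAction G S where
  smul g A := ⟨g • A.1, hS.smul_mem g A.1 A.2⟩
  one_smul A := Subtype.ext (one_smul G A.1)
  mul_smul g k A := Subtype.ext (mul_smul g k A.1)

theorem isNestedPocset :
    IsNestedPocset fun A : S ↦ (⟨A.1ᶜ, hS.compl_mem A.1 A.2⟩ : S) where
  involutive A := Subtype.ext (compl_compl A.1)
  antitone _ _ h := Set.compl_subset_compl.2 h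
  not_compl_le A h := by
    obtain ⟨x, hx⟩ := hS.nonempty _ (hS.compl_mem A.1 A.2)
    exact hx (h hx)
  nested A B := hS.nested A.1 A.2 B.1 B.2

theorem isPocVertex_setOf_mem (x : X) :
    IsPocVertex (fun A : S ↦ (⟨A.1ᶜ, hS.compl_mem A.1 A.2⟩ : S)) {A : S | x ∈ A.1} where
  isUpperSet _ _ h hx := h hx
  compl_mem_iff _ := Iff.rfl
  finite_le A _ := by
    obtain ⟨y, hy⟩ := hS.nonempty _ (hS.compl_mem A.1 A.2)
    refine .of_finite_image (f := Subtype.val) ((hS.finite_separating x y).subset ?_)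
      Subtype.val_injective.injOn
    rintro _ ⟨B, ⟨hxB, hBA⟩, rfl⟩
    exact ⟨B.2, hxB, fun hyB ↦ hy (hBA hyB)⟩

end IsNestedFamily

theorem IsNestedFamily.exists_tree {G : Type*} {X : Type u} [Group G] [MulAction G X] [Nonempty X]
    {S : Set (Set X)} (hS : IsNestedFamily G S) :
    ∃ (V : Type u) (_ : MulAction G V) (E : V → V → Prop), IsInvariantOrientedTree G E ∧
      (∀ g : G, IsOfFinOrder g → ∃ v : V, g • v = v) ∧
      ∀ g : G, ∀ A ∈ S, A ⊂ g • A → ∀ v : V, g • v ≠ v := by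
  obtain ⟨x⟩ := ‹Nonempty X›
  let _ := hS.action
  have h := hS.isNestedPocset.isPocAction_subdivision (G := G)
    (fun g A B hAB ↦ Set.smul_set_mono hAB) fun g A ↦ Subtype.ext (Set.smul_set_compl)
  have : Nonempty (PocVertex _) := ⟨_, (hS.isPocVertex_setOf_mem x).subdivision⟩
  refine ⟨_, h.vertexAction, _, h.isInvariantOrientedTree, fun g hg ↦ ?_, fun g A hA hlt v hv ↦ ?_⟩
  · obtain ⟨o, ho, hgo⟩ := h.exists_smul_eq hg
    exact ⟨⟨o, ho⟩, Subtype.ext hgo⟩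
  · let a : Subdivision S := toLex (⟨A, hA⟩, false)
    have ha : a < g • a := (Prod.Lex.toLex_lt_toLex).2 (.inl hlt)
    exact h.smul_ne_of_lt_smul v.2 ha (congrArg Subtype.val hv)

end NestedFamily

section Cuts

variable {V : Type*} {X : SimpleGraph V} {A B C D : Set V} {p p' q q' : Ultrafilter V} {k : ℕ}

/-- The edges of `X` joining `A` to its complement. -/
def edgeBoundary (X : SimpleGraph V) (A : Set V) : Set (Sym2 V) :=
  {e ∈ X.edgeSet | (∃ x ∈ e, x ∈ A) ∧ ∃ x ∈ e, x ∉ A}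

theorem mk_mem_edgeBoundary {x y : V} :
    s(x, y) ∈ edgeBoundary X A ↔ X.Adj x y ∧ ¬(x ∈ A ↔ y ∈ A) := by
  simp only [edgeBoundary, Set.mem_ofPred_eq, SimpleGraph.mem_edgeSet, Sym2.mem_iff,
    exists_eq_or_imp, exists_eq_left]
  tauto

theorem edgeBoundary_compl : edgeBoundary X Aᶜ = edgeBoundary X A := by
  ext ⟨x, y⟩
  simp only [mk_mem_edgeBoundary, Set.mem_compl_iff, not_iff_not]

theorem edgeBoundary_inter_subset :
    edgeBoundary X (A ∩ B) ⊆ edgeBoundary X A ∪ edgeBoundary X B := by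
  rintro ⟨x, y⟩
  simp only [mk_mem_edgeBoundary, Set.mem_union, Set.mem_inter_iff]
  tauto

theorem edgeBoundary_compl_inter_compl_subset :
    edgeBoundary X (Aᶜ ∩ Bᶜ) ⊆ edgeBoundary X A ∪ edgeBoundary X B := by
  simpa only [edgeBoundary_compl] using edgeBoundary_inter_subset (A := Aᶜ) (B := Bᶜ)

theorem ncard_edgeBoundary_inter_add_le (hA : (edgeBoundary X A).Finite)
    (hB : (edgeBoundary X B).Finite) :
    (edgeBoundary X (A ∩ B)).ncard + (edgeBoundary X (Aᶜ ∩ Bᶜ)).ncard ≤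
      (edgeBoundary X A).ncard + (edgeBoundary X B).ncard := by
  have hAB := hA.union hB
  rw [← Set.ncard_union_add_ncard_inter _ _ (hAB.subset edgeBoundary_inter_subset)
    (hAB.subset edgeBoundary_compl_inter_compl_subset), ← Set.ncard_union_add_ncard_inter _ _ hA hB]
  refine add_le_add (Set.ncard_le_ncard (Set.union_subset edgeBoundary_inter_subset
    edgeBoundary_compl_inter_compl_subset) hAB) (Set.ncard_le_ncard ?_ (hA.inter_of_left _))
  rintro ⟨x, y⟩
  simp only [mk_mem_edgeBoundary, Set.mem_inter_iff, Set.mem_compl_iff]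
  tauto

theorem edgeBoundary_union_sdiff (hBA : B ⊆ A) (hadj : ∀ a ∈ B, ∀ b ∈ A, X.Adj a b → b ∈ B) :
    edgeBoundary X B ∪ edgeBoundary X (A \ B) = edgeBoundary X A := by
  ext ⟨x, y⟩
  have hxy (h : X.Adj x y) (hx : x ∈ A) (hy : y ∈ A) : x ∈ B ↔ y ∈ B :=
    ⟨fun hxB ↦ hadj x hxB y hy h, fun hyB ↦ hadj y hyB x hx h.symm⟩
  have hx := @hBA x
  have hy := @hBA y
  simp only [mk_mem_edgeBoundary, Set.mem_union, Set.mem_sdiff]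
  tauto

theorem disjoint_edgeBoundary_sdiff (hBA : B ⊆ A)
    (hadj : ∀ a ∈ B, ∀ b ∈ A, X.Adj a b → b ∈ B) :
    Disjoint (edgeBoundary X B) (edgeBoundary X (A \ B)) := by
  rw [Set.disjoint_left]
  rintro ⟨x, y⟩
  have hxy (h : X.Adj x y) (hx : x ∈ A) (hy : y ∈ A) : x ∈ B ↔ y ∈ B :=
    ⟨fun hxB ↦ hadj x hxB y hy h, fun hyB ↦ hadj y hyB x hx h.symm⟩
  have hx := @hBA x
  have hy := @hBA y
  simp only [mk_mem_edgeBoundary, Set.mem_sdiff]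
  tauto

theorem finite_vertices_edgeBoundary (hA : (edgeBoundary X A).Finite) :
    {x | ∃ e ∈ edgeBoundary X A, x ∈ e}.Finite := by
  classical
  refine (hA.biUnion fun e _ ↦ e.toFinset.finite_toSet).subset ?_
  rintro x ⟨e, he, hx⟩
  exact Set.mem_biUnion he (Sym2.mem_toFinset.2 hx)

theorem exists_adj_mem_notMem (hX : X.Preconnected) {x y : V}
    (hx : x ∈ A) (hy : y ∉ A) : ∃ a ∈ A, ∃ b ∉ A, X.Adj a b := by
  obtain ⟨d, -, hd, hd'⟩ := (hX x y).some.exists_boundary_dart A hx hy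
  exact ⟨_, hd, _, hd', d.adj⟩

theorem edgeBoundary_nonempty (hX : X.Preconnected) (hA : A.Nonempty)
    (hA' : Aᶜ.Nonempty) : (edgeBoundary X A).Nonempty := by
  obtain ⟨x, hx⟩ := hA
  obtain ⟨y, hy⟩ := hA'
  obtain ⟨a, ha, b, hb, hab⟩ := exists_adj_mem_notMem hX hx hy
  exact ⟨s(a, b), mk_mem_edgeBoundary.2 ⟨hab, by tauto⟩⟩

/-- `A` separates two ultrafilters, which stand for points at infinity of the graph. -/
def Separates (A : Set V) (p q : Ultrafilter V) : Prop := ¬(A ∈ p ↔ A ∈ q)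

theorem separates_compl : Separates Aᶜ p q ↔ Separates A p q := by
  simp only [Separates, Ultrafilter.compl_mem_iff_notMem, not_iff_not]

theorem Separates.nonempty (h : Separates A p q) : A.Nonempty := by
  rw [Set.nonempty_iff_ne_empty]
  rintro rfl
  exact h (iff_of_false p.empty_notMem q.empty_notMem)

theorem Separates.or_sdiff (h : Separates A p q) (hBA : B ⊆ A) :
    Separates B p q ∨ Separates (A \ B) p q := by
  have hmem (r : Ultrafilter V) : A ∈ r ↔ B ∈ r ∨ A \ B ∈ r := by
    rw [← Ultrafilter.union_mem_iff, Set.union_sdiff_cancel hBA]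
  simp only [Separates, hmem p, hmem q] at h ⊢
  tauto

/-- `A` separates `p` from `q` by a finite edge boundary of the smallest possible size. -/
structure IsMinCut (X : SimpleGraph V) (A : Set V) (p q : Ultrafilter V) : Prop where
  finite : (edgeBoundary X A).Finite
  separates : Separates A p q
  ncard_le : ∀ B, (edgeBoundary X B).Finite → Separates B p q →
    (edgeBoundary X A).ncard ≤ (edgeBoundary X B).ncard

theorem IsMinCut.compl (h : IsMinCut X A p q) : IsMinCut X Aᶜ p q where
  finite := by rw [edgeBoundary_compl]; exact h.finite
  separates := separates_compl.2 h.separates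
  ncard_le := by rw [edgeBoundary_compl]; exact h.ncard_le

theorem IsMinCut.preconnected_induce (h : IsMinCut X A p q) (hX : X.Preconnected) :
    (X.induce A).Preconnected := by
  intro x y
  let B : Set V := Subtype.val '' {z | (X.induce A).Reachable x z}
  by_contra hxy
  have hBA : B ⊆ A := Subtype.coe_image_subset _ _
  have hadj : ∀ a ∈ B, ∀ b ∈ A, X.Adj a b → b ∈ B := by
    rintro _ ⟨a, ha, rfl⟩ b hb hab
    exact ⟨⟨b, hb⟩, ha.trans (SimpleGraph.Adj.reachable (G := X.induce A) hab), rfl⟩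
  have hxB : x.1 ∈ B := ⟨x, .refl x, rfl⟩
  have hyB : y.1 ∈ A \ B := ⟨y.2, by rintro ⟨z, hz, hzy⟩; exact hxy (Subtype.ext hzy ▸ hz)⟩
  have hunion := edgeBoundary_union_sdiff hBA hadj
  have hB := h.finite.subset (hunion ▸ Set.subset_union_left)
  have hAB := h.finite.subset (hunion ▸ Set.subset_union_right)
  have hcard := Set.ncard_union_eq (disjoint_edgeBoundary_sdiff hBA hadj) hB hAB
  rw [hunion] at hcard
  have hposB := (Set.ncard_pos hB).2 (edgeBoundary_nonempty hX ⟨x, hxB⟩ ⟨y, hyB.2⟩)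
  have hposAB :=
    (Set.ncard_pos hAB).2 (edgeBoundary_nonempty hX ⟨y, hyB⟩ ⟨x, fun hx ↦ hx.2 hxB⟩)
  obtain hs | hs := h.separates.or_sdiff hBA
  · have := h.ncard_le _ hB hs
    lia
  · have := h.ncard_le _ hAB hs
    lia

theorem reachable_deleteEdges {S : Set (Sym2 V)} (hD : (X.induce D).Preconnected)
    (hS : S ⊆ edgeBoundary X D) {x y : V} (hx : x ∈ D) (hy : y ∈ D) :
    (X.deleteEdges S).Reachable x y := by
  let f : X.induce D →g X.deleteEdges S := ⟨Subtype.val, fun {a b} hab ↦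
    SimpleGraph.deleteEdges_adj.2
      ⟨hab, fun h ↦ (mk_mem_edgeBoundary.1 (hS h)).2 (iff_of_true a.2 b.2)⟩⟩
  exact (hD ⟨x, hx⟩ ⟨y, hy⟩).map f

/-- The cuts with connected sides and at most `k` boundary edges separating two given vertices. -/
def connectedCuts (X : SimpleGraph V) (k : ℕ) (x y : V) : Set (Set V) :=
  {D | (X.induce D).Preconnected ∧ (X.induce Dᶜ).Preconnected ∧ x ∈ D ∧ y ∉ D ∧
    (edgeBoundary X D).Finite ∧ (edgeBoundary X D).ncard ≤ k}

/- A walk from `x` to `y` avoiding the known boundary edges `S` crosses the boundary in one of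
finitely many new edges; if there is no such walk, the cut is the component of `x`. -/
theorem finite_connectedCuts_of_subset (x y : V) (n : ℕ) {S : Set (Sym2 V)} (hS : S.Finite)
    (hk : k < S.ncard + n) : {D ∈ connectedCuts X k x y | S ⊆ edgeBoundary X D}.Finite := by
  induction n generalizing S with
  | zero =>
    refine Set.finite_empty.subset ?_
    rintro D ⟨⟨-, -, -, -, hfin, hle⟩, hSD⟩
    have := Set.ncard_le_ncard hSD hfin
    lia
  | succ n ih =>
    by_cases hxy : (X.deleteEdges S).Reachable x y
    · obtain ⟨w⟩ := hxy
      have hw (e) (he : e ∈ w.edges) : e ∉ S := by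
        have := w.edges_subset_edgeSet he
        rw [SimpleGraph.edgeSet_deleteEdges] at this
        exact this.2
      refine (w.edges.finite_toSet.biUnion fun e he ↦ ih (hS.insert e) ?_).subset ?_
      · rw [Set.ncard_insert_of_notMem (hw e he) hS]
        lia
      · rintro D ⟨hD, hSD⟩
        obtain ⟨d, hd, hdD, hdD'⟩ := w.exists_boundary_dart D hD.2.2.1 hD.2.2.2.1
        refine Set.mem_biUnion (List.mem_map_of_mem hd) ⟨hD, Set.insert_subset ?_ hSD⟩
        exact mk_mem_edgeBoundary.2 ⟨(SimpleGraph.deleteEdges_adj.1 d.adj).1, by tauto⟩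
    · refine (Set.finite_singleton {z | (X.deleteEdges S).Reachable x z}).subset ?_
      rintro D ⟨⟨hD, hD', hx, hy, -, -⟩, hSD⟩
      refine Set.Subset.antisymm (fun z hz ↦ reachable_deleteEdges hD hSD hx hz) fun z hz ↦ ?_
      by_contra hzD
      exact hxy (hz.trans (reachable_deleteEdges hD' (hSD.trans edgeBoundary_compl.ge) hzD hy))

theorem finite_connectedCuts (x y : V) : (connectedCuts X k x y).Finite := by
  simpa using finite_connectedCuts_of_subset x y (k + 1) (X := X) (k := k) Set.finite_empty

/-- The minimal cuts, for any pair of ultrafilters, with at most `k` boundary edges. -/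
def minCuts (X : SimpleGraph V) (k : ℕ) : Set (Set V) :=
  {A | (edgeBoundary X A).ncard ≤ k ∧ ∃ p q, IsMinCut X A p q}

theorem finite_edgeBoundary_of_mem_minCuts (hA : A ∈ minCuts X k) : (edgeBoundary X A).Finite :=
  let ⟨_, _, _, h⟩ := hA
  h.finite

theorem mem_connectedCuts (hX : X.Preconnected) (hA : A ∈ minCuts X k) {x y : V} (hx : x ∈ A)
    (hy : y ∉ A) : A ∈ connectedCuts X k x y := by
  obtain ⟨hk, p, q, h⟩ := hA
  exact ⟨h.preconnected_induce hX, h.compl.preconnected_induce hX, hx, hy, h.finite, hk⟩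

/-- All four corners of `A` and `B` are nonempty. -/
def Crosses (A B : Set V) : Prop :=
  (A ∩ B).Nonempty ∧ (A ∩ Bᶜ).Nonempty ∧ (Aᶜ ∩ B).Nonempty ∧ (Aᶜ ∩ Bᶜ).Nonempty

theorem Crosses.compl_left (h : Crosses A B) : Crosses Aᶜ B := by
  obtain ⟨h₁, h₂, h₃, h₄⟩ := h
  exact ⟨h₃, h₄, by rwa [compl_compl], by rwa [compl_compl]⟩

theorem Crosses.symm (h : Crosses A B) : Crosses B A := by
  obtain ⟨h₁, h₂, h₃, h₄⟩ := h
  refine ⟨?_, ?_, ?_, ?_⟩ <;> rwa [Set.inter_comm]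

theorem Crosses.compl_right (h : Crosses A B) : Crosses A Bᶜ :=
  h.symm.compl_left.symm

theorem crosses_compl_right : Crosses A Bᶜ ↔ Crosses A B :=
  ⟨fun h ↦ by simpa only [compl_compl] using h.compl_right, Crosses.compl_right⟩

theorem nested_of_not_crosses (h : ¬Crosses A B) : A ⊆ B ∨ A ⊆ Bᶜ ∨ Aᶜ ⊆ B ∨ B ⊆ A := by
  simp only [Crosses, Set.inter_nonempty, not_and_or, not_exists, Set.mem_compl_iff,
    not_not] at h
  simp only [Set.subset_def, Set.mem_compl_iff]
  grind

theorem Crosses.of_inter (hAB : (Aᶜ ∩ Bᶜ).Nonempty) (h : Crosses D (A ∩ B)) :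
    Crosses D A ∨ Crosses D B := by
  by_contra! hD
  have hDA := nested_of_not_crosses hD.1
  have hDB := nested_of_not_crosses hD.2
  obtain ⟨e, heA, heB⟩ := hAB
  obtain ⟨⟨a, ha, haA, haB⟩, ⟨b, hb, hb'⟩, ⟨c, hc, hcA, hcB⟩, ⟨d, hd, hd'⟩⟩ := h
  simp only [Set.subset_def, Set.mem_compl_iff, Set.mem_inter_iff] at *
  grind

theorem Crosses.of_inter_of_compl_inter_compl (h : Crosses D (A ∩ B))
    (h' : Crosses D (Aᶜ ∩ Bᶜ)) : Crosses D A ∧ Crosses D B := by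
  obtain ⟨⟨a, ha, haA, haB⟩, -, ⟨b, hb, hbA, hbB⟩, -⟩ := h
  obtain ⟨⟨c, hc, hcA, hcB⟩, -, ⟨d, hd, hdA, hdB⟩, -⟩ := h'
  exact ⟨⟨⟨a, ha, haA⟩, ⟨c, hc, hcA⟩, ⟨b, hb, hbA⟩, d, hd, hdA⟩,
    ⟨a, ha, haB⟩, ⟨c, hc, hcB⟩, ⟨b, hb, hbB⟩, d, hd, hdB⟩

/-- The minimal cuts with at most `k` boundary edges that cross `A`. -/
def crossingCuts (X : SimpleGraph V) (k : ℕ) (A : Set V) : Set (Set V) :=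
  {D ∈ minCuts X k | Crosses D A}

theorem crossingCuts_compl : crossingCuts X k Aᶜ = crossingCuts X k A := by
  simp only [crossingCuts, crosses_compl_right]

theorem exists_mem_edgeBoundary_of_preconnected (hD : (X.induce D).Preconnected)
    (h : (D ∩ A).Nonempty) (h' : (D ∩ Aᶜ).Nonempty) : ∃ e ∈ edgeBoundary X A, ∃ x ∈ e, x ∈ D := by
  obtain ⟨x, hxD, hxA⟩ := h
  obtain ⟨y, hyD, hyA⟩ := h'
  obtain ⟨a, ha, b, hb, hab⟩ := exists_adj_mem_notMem hD (A := Subtype.val ⁻¹' A)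
    (x := ⟨x, hxD⟩) (y := ⟨y, hyD⟩) hxA hyA
  exact ⟨s(a.1, b.1), mk_mem_edgeBoundary.2 ⟨hab, fun h ↦ hb (h.1 ha)⟩, a, by simp, a.2⟩

theorem finite_crossingCuts (hX : X.Preconnected) (hA : (edgeBoundary X A).Finite) :
    (crossingCuts X k A).Finite := by
  have hV := finite_vertices_edgeBoundary hA
  refine (hV.biUnion fun x _ ↦ hV.biUnion fun y _ ↦
    finite_connectedCuts (X := X) (k := k) x y).subset ?_
  rintro D ⟨hD, h₁, h₂, h₃, h₄⟩
  obtain ⟨-, p, q, hpq⟩ := id hD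
  obtain ⟨e, he, x, hxe, hx⟩ :=
    exists_mem_edgeBoundary_of_preconnected (hpq.preconnected_induce hX) h₁ h₂
  obtain ⟨e', he', y, hye, hy⟩ :=
    exists_mem_edgeBoundary_of_preconnected (hpq.compl.preconnected_induce hX) h₃ h₄
  exact Set.mem_biUnion ⟨e, he, hxe⟩
    (Set.mem_biUnion ⟨e', he', hye⟩ (mem_connectedCuts hX hD hx hy))

theorem ncard_crossingCuts_inter_add_lt (hX : X.Preconnected) (hA : A ∈ minCuts X k)
    (hB : B ∈ minCuts X k) (hAB : Crosses A B) :
    (crossingCuts X k (A ∩ B)).ncard + (crossingCuts X k (Aᶜ ∩ Bᶜ)).ncard <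
      (crossingCuts X k A).ncard + (crossingCuts X k B).ncard := by
  have hA' := finite_edgeBoundary_of_mem_minCuts hA
  have hB' := finite_edgeBoundary_of_mem_minCuts hB
  have hAB' := hA'.union hB'
  have finA := finite_crossingCuts (k := k) hX hA'
  have finB := finite_crossingCuts (k := k) hX hB'
  rw [← Set.ncard_union_add_ncard_inter _ _
    (finite_crossingCuts hX (hAB'.subset edgeBoundary_inter_subset))
    (finite_crossingCuts hX (hAB'.subset edgeBoundary_compl_inter_compl_subset)),
    ← Set.ncard_union_add_ncard_inter _ _ finA finB]
  refine add_lt_add_of_lt_of_le (Set.ncard_lt_ncard ?_ (finA.union finB))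
    (Set.ncard_le_ncard ?_ (finA.inter_of_left _))
  · rw [Set.ssubset_iff_of_subset]
    · refine ⟨A, .inr ⟨hA, hAB⟩, ?_⟩
      rintro (⟨-, -, -, ⟨x, hx, hx'⟩, -⟩ | ⟨-, ⟨x, hx, hx'⟩, -⟩)
      exacts [hx hx'.1, hx'.1 hx]
    · rintro D (⟨hD, h⟩ | ⟨hD, h⟩)
      · exact (h.of_inter hAB.2.2.2).imp (⟨hD, ·⟩) (⟨hD, ·⟩)
      · rw [← crossingCuts_compl (A := A), ← crossingCuts_compl (A := B)]
        exact (h.of_inter (by simpa only [compl_compl] using hAB.1)).imp (⟨hD, ·⟩) (⟨hD, ·⟩)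
  · rintro D ⟨⟨hD, h⟩, -, h'⟩
    exact (h.of_inter_of_compl_inter_compl h').imp (⟨hD, ·⟩) (⟨hD, ·⟩)

/-- A minimal cut with at most `k` boundary edges which, among the minimal cuts for the same
ultrafilters, crosses as few members of `minCuts X k` as possible. -/
structure IsOptimalCut (X : SimpleGraph V) (k : ℕ) (A : Set V) (p q : Ultrafilter V) : Prop
    extends IsMinCut X A p q where
  ncard_edgeBoundary_le : (edgeBoundary X A).ncard ≤ k
  ncard_crossingCuts_le : ∀ B, IsMinCut X B p q →
    (crossingCuts X k A).ncard ≤ (crossingCuts X k B).ncard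

theorem IsOptimalCut.compl (h : IsOptimalCut X k A p q) : IsOptimalCut X k Aᶜ p q where
  toIsMinCut := h.toIsMinCut.compl
  ncard_edgeBoundary_le := by rw [edgeBoundary_compl]; exact h.ncard_edgeBoundary_le
  ncard_crossingCuts_le := by rw [crossingCuts_compl]; exact h.ncard_crossingCuts_le

theorem IsOptimalCut.mem_minCuts (h : IsOptimalCut X k A p q) : A ∈ minCuts X k :=
  ⟨h.ncard_edgeBoundary_le, p, q, h.toIsMinCut⟩

theorem exists_isOptimalCut (hA : (edgeBoundary X A).Finite) (hk : (edgeBoundary X A).ncard ≤ k)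
    (hs : Separates A p q) : ∃ B, IsOptimalCut X k B p q := by
  have hmin : {B | IsMinCut X B p q}.Nonempty := by
    have hne : {B | (edgeBoundary X B).Finite ∧ Separates B p q}.Nonempty := ⟨A, hA, hs⟩
    let size (B : Set V) := (edgeBoundary X B).ncard
    obtain ⟨hfin, hsep⟩ := Function.argminOn_mem size _ hne
    exact ⟨_, hfin, hsep, fun B hB hB' ↦ Function.argminOn_le size _ (Set.mem_ofPred.2 ⟨hB, hB'⟩)⟩
  let crossing (B : Set V) := (crossingCuts X k B).ncard
  have hB : IsMinCut X (Function.argminOn crossing _ hmin) p q :=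
    Function.argminOn_mem crossing _ hmin
  exact ⟨_, hB, (hB.ncard_le A hA hs).trans hk, fun B hB ↦
    Function.argminOn_le crossing _ (Set.mem_ofPred.2 hB)⟩

theorem IsOptimalCut.ncard_crossingCuts_add_lt (hX : X.Preconnected) (hA : A ∈ minCuts X k)
    (hB : B ∈ minCuts X k) (hAB : Crosses A B) (hC : IsOptimalCut X k C p p')
    (hD : IsOptimalCut X k D q q')
    (hle : (edgeBoundary X A).ncard + (edgeBoundary X B).ncard ≤
      (edgeBoundary X C).ncard + (edgeBoundary X D).ncard)
    (hp : Separates (A ∩ B) p p') (hq : Separates (Aᶜ ∩ Bᶜ) q q') :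
    (crossingCuts X k C).ncard + (crossingCuts X k D).ncard <
      (crossingCuts X k A).ncard + (crossingCuts X k B).ncard := by
  have finA := finite_edgeBoundary_of_mem_minCuts hA
  have finB := finite_edgeBoundary_of_mem_minCuts hB
  have hsub := ncard_edgeBoundary_inter_add_le finA finB
  have fin := (finA.union finB).subset edgeBoundary_inter_subset
  have fin' := (finA.union finB).subset edgeBoundary_compl_inter_compl_subset
  have hCle := hC.ncard_le _ fin hp
  have hDle := hD.ncard_le _ fin' hq
  have hmin : IsMinCut X (A ∩ B) p p' :=
    ⟨fin, hp, fun E hE hE' ↦ by have := hC.ncard_le E hE hE'; lia⟩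
  have hmin' : IsMinCut X (Aᶜ ∩ Bᶜ) q q' :=
    ⟨fin', hq, fun E hE hE' ↦ by have := hD.ncard_le E hE hE'; lia⟩
  exact (add_le_add (hC.ncard_crossingCuts_le _ hmin) (hD.ncard_crossingCuts_le _ hmin')).trans_lt
    (ncard_crossingCuts_inter_add_lt hX hA hB hAB)

theorem separates_inter_iff :
    Separates (A ∩ B) p q ↔ ¬(A ∈ p ∧ B ∈ p ↔ A ∈ q ∧ B ∈ q) :=
  not_congr (iff_congr Filter.inter_mem_iff Filter.inter_mem_iff)

theorem IsOptimalCut.separates_of_crosses (hX : X.Preconnected) (hA : IsOptimalCut X k A p p')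
    (hB : IsOptimalCut X k B q q') (h : Crosses A B) : Separates B p p' ∧ Separates A q q' := by
  have hcorner {A B : Set V} (hA : IsOptimalCut X k A p p') (hB : IsOptimalCut X k B q q')
      (h : Crosses A B) (hq : Separates (A ∩ B) q q') (hp : Separates (Aᶜ ∩ Bᶜ) p p') : False :=
    (ncard_crossingCuts_add_lt hX hA.mem_minCuts hB.mem_minCuts h hB hA (add_comm _ _).le
      hq hp).ne (add_comm _ _)
  have h₁ := hcorner hA hB h
  have h₂ := hcorner hA.compl hB h.compl_left
  have h₃ := hcorner hA hB.compl h.compl_right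
  have h₄ := hcorner hA.compl hB.compl h.compl_left.compl_right
  have hp := hA.separates
  have hq := hB.separates
  clear hcorner hA hB h
  simp only [separates_inter_iff, compl_compl, Ultrafilter.compl_mem_iff_notMem] at h₁ h₂ h₃ h₄
  simp only [Separates] at *
  grind

theorem IsOptimalCut.ncard_crossingCuts_lt (hX : X.Preconnected) (hA : IsOptimalCut X k A p q)
    (hB : B ∈ minCuts X k) (h : Crosses A B) (hBs : Separates B p q)
    (hBA : (edgeBoundary X B).ncard ≤ (edgeBoundary X A).ncard) :
    (crossingCuts X k A).ncard < (crossingCuts X k B).ncard := by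
  have hAs := hA.separates
  have hcorners : Separates (A ∩ B) p q ∧ Separates (Aᶜ ∩ Bᶜ) p q ∨
      Separates (Aᶜ ∩ B) p q ∧ Separates (A ∩ Bᶜ) p q := by
    simp only [separates_inter_iff, Ultrafilter.compl_mem_iff_notMem]
    simp only [Separates] at hAs hBs
    grind
  obtain ⟨hs, hs'⟩ | ⟨hs, hs'⟩ := hcorners
  · exact lt_of_add_lt_add_left (ncard_crossingCuts_add_lt hX hA.mem_minCuts hB h hA hA
      (add_le_add_right hBA _) hs hs')
  · have := ncard_crossingCuts_add_lt hX hA.compl.mem_minCuts hB h.compl_left hA hA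
      (by rw [edgeBoundary_compl]; exact add_le_add_right hBA _) hs (by rwa [compl_compl])
    rw [crossingCuts_compl] at this
    exact lt_of_add_lt_add_left this

/- If `A` and `B` cross, no two opposite corners separate both pairs, by the choice of crossing
numbers; hence each of the two cuts separates both pairs, so that their boundaries have the same
size, and comparing corners again each has a smaller crossing number than the other. -/
theorem IsOptimalCut.not_crosses (hX : X.Preconnected) (hA : IsOptimalCut X k A p p')
    (hB : IsOptimalCut X k B q q') : ¬Crosses A B := by
  intro h
  obtain ⟨hBp, hAq⟩ := hA.separates_of_crosses hX hB h
  exact (hA.ncard_crossingCuts_lt hX hB.mem_minCuts h hBp (hB.ncard_le A hA.finite hAq)).not_gt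
    (hB.ncard_crossingCuts_lt hX hA.mem_minCuts h.symm hAq (hA.ncard_le B hB.finite hBp))

section Action

open scoped Pointwise

variable {G : Type*} [Group G] [MulAction G V]
  (hG : ∀ (g : G) {x y : V}, X.Adj x y → X.Adj (g • x) (g • y))

include hG

theorem edgeBoundary_smul (g : G) :
    edgeBoundary X (g • A) = Sym2.map (g • ·) '' edgeBoundary X A := by
  have hadj {x y : V} : X.Adj (g⁻¹ • x) (g⁻¹ • y) ↔ X.Adj x y :=
    ⟨fun h ↦ by simpa using hG g h, hG g⁻¹⟩
  have hinv : Function.LeftInverse (Sym2.map (g⁻¹ • ·)) (Sym2.map (α := V) (g • ·)) := by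
    rintro ⟨x, y⟩
    simp
  have hinv' : Function.RightInverse (Sym2.map (g⁻¹ • ·)) (Sym2.map (α := V) (g • ·)) := by
    rintro ⟨x, y⟩
    simp
  rw [Set.image_eq_preimage_of_inverse hinv hinv']
  ext ⟨x, y⟩
  simp only [Set.mem_preimage, Sym2.map_mk, mk_mem_edgeBoundary, hadj,
    Set.mem_smul_set_iff_inv_smul_mem]

theorem finite_edgeBoundary_smul (g : G) (hA : (edgeBoundary X A).Finite) :
    (edgeBoundary X (g • A)).Finite :=
  edgeBoundary_smul hG g ▸ hA.image _

theorem ncard_edgeBoundary_smul (g : G) :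
    (edgeBoundary X (g • A)).ncard = (edgeBoundary X A).ncard := by
  rw [edgeBoundary_smul hG]
  exact Set.ncard_image_of_injective _ (Sym2.map.injective (MulAction.injective g))

omit hG in
theorem separates_map_iff (g : G) :
    Separates A (p.map (g • ·)) (q.map (g • ·)) ↔ Separates (g⁻¹ • A) p q := by
  simp only [Separates, Ultrafilter.mem_map, Set.preimage_smul]

theorem IsMinCut.smul (h : IsMinCut X A p q) (g : G) :
    IsMinCut X (g • A) (p.map (g • ·)) (q.map (g • ·)) where
  finite := finite_edgeBoundary_smul hG g h.finite
  separates := by rw [separates_map_iff, inv_smul_smul]; exact h.separates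
  ncard_le B hB hs := by
    rw [ncard_edgeBoundary_smul hG, ← ncard_edgeBoundary_smul hG g⁻¹ (A := B)]
    exact h.ncard_le _ (finite_edgeBoundary_smul hG _ hB) ((separates_map_iff g).1 hs)

theorem smul_mem_minCuts (g : G) (hA : A ∈ minCuts X k) : g • A ∈ minCuts X k := by
  obtain ⟨hk, p, q, h⟩ := hA
  exact ⟨(ncard_edgeBoundary_smul hG g).trans_le hk, _, _, h.smul hG g⟩

omit hG in
theorem Crosses.smul (h : Crosses A B) (g : G) : Crosses (g • A) (g • B) := by
  simpa only [Crosses, ← Set.smul_set_compl, ← Set.smul_set_inter, Set.smul_set_nonempty] using h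

theorem crossingCuts_smul (g : G) : crossingCuts X k (g • A) = g • crossingCuts X k A := by
  ext D
  rw [Set.mem_smul_set_iff_inv_smul_mem]
  constructor <;> rintro ⟨hD, h⟩
  · exact ⟨smul_mem_minCuts hG _ hD, by simpa using h.smul g⁻¹⟩
  · exact ⟨by simpa using smul_mem_minCuts hG g hD, by simpa using h.smul g⟩

theorem ncard_crossingCuts_smul (g : G) :
    (crossingCuts X k (g • A)).ncard = (crossingCuts X k A).ncard := by
  rw [crossingCuts_smul hG]
  exact Set.ncard_image_of_injective _ (MulAction.injective g)

theorem IsOptimalCut.smul (h : IsOptimalCut X k A p q) (g : G) :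
    IsOptimalCut X k (g • A) (p.map (g • ·)) (q.map (g • ·)) where
  toIsMinCut := h.toIsMinCut.smul hG g
  ncard_edgeBoundary_le := (ncard_edgeBoundary_smul hG g).trans_le h.ncard_edgeBoundary_le
  ncard_crossingCuts_le B hB := by
    have hB' := hB.smul hG g⁻¹
    simp only [Ultrafilter.map_map, Function.comp_def, inv_smul_smul] at hB'
    rw [ncard_crossingCuts_smul hG, ← ncard_crossingCuts_smul hG g⁻¹ (A := B)]
    exact h.ncard_crossingCuts_le _ hB'

theorem isNestedFamily_setOf_isOptimalCut (hX : X.Preconnected) (k : ℕ) :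
    IsNestedFamily G {A | ∃ p q, IsOptimalCut X k A p q} where
  nonempty := by
    rintro A ⟨p, q, h⟩
    exact h.separates.nonempty
  compl_mem := by
    rintro A ⟨p, q, h⟩
    exact ⟨p, q, h.compl⟩
  smul_mem := by
    rintro g A ⟨p, q, h⟩
    exact ⟨_, _, h.smul hG g⟩
  nested := by
    rintro A ⟨p, p', hA⟩ B ⟨q, q', hB⟩
    exact nested_of_not_crosses (hA.not_crosses hX hB)
  finite_separating x y := by
    refine (finite_connectedCuts (X := X) (k := k) x y).subset ?_
    rintro A ⟨⟨p, q, h⟩, hx, hy⟩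
    exact mem_connectedCuts hX h.mem_minCuts hx hy

end Action

end Cuts

section AlmostInvariant

open scoped Pointwise

variable {F G : Type*} [Group F] [Group G] {A : Set G} {T : Set G}

/-- Every right translate of `A` differs from `A` by finitely many elements. -/
def AlmostInvariant (A : Set G) : Prop := ∀ z : G, {y | ¬(y ∈ A ↔ y * z ∈ A)}.Finite

theorem almostInvariant_of_closure_eq_top (hT : Subgroup.closure T = ⊤)
    (h : ∀ z ∈ T, {y | ¬(y ∈ A ↔ y * z ∈ A)}.Finite) : AlmostInvariant A := by
  intro z
  have hz : z ∈ Subgroup.closure T := hT ▸ Subgroup.mem_top z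
  induction hz using Subgroup.closure_induction with
  | mem z hz => exact h z hz
  | one => simp
  | mul a b _ _ ha hb =>
    refine (ha.union (hb.preimage (mul_left_injective a).injOn)).subset fun y ↦ ?_
    simp only [Set.mem_union, Set.mem_preimage, Set.mem_ofPred_eq, mul_assoc]
    tauto
  | inv a _ ha =>
    refine (ha.preimage (mul_left_injective a⁻¹).injOn).subset fun y ↦ ?_
    simp only [Set.mem_preimage, Set.mem_ofPred_eq, inv_mul_cancel_right]
    tauto

theorem preconnected_mulCayley (hT : Subgroup.closure T = ⊤) :
    (SimpleGraph.mulCayley T).Preconnected := by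
  have hmul (z : G) : ∀ x, (SimpleGraph.mulCayley T).Reachable x (x * z) := by
    have hz : z ∈ Subgroup.closure T := hT ▸ Subgroup.mem_top z
    induction hz using Subgroup.closure_induction with
    | mem z hz =>
      intro x
      by_cases hx : x = x * z
      · exact hx ▸ .refl x
      · exact SimpleGraph.Adj.reachable ((SimpleGraph.mulCayley_adj T _ _).2 ⟨hx, by simp [hz]⟩)
    | one => simp
    | mul a b _ _ ha hb =>
      intro x
      rw [← mul_assoc]
      exact (ha x).trans (hb _)
    | inv a _ ha =>
      intro x
      simpa using (ha (x * a⁻¹)).symm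
  intro x y
  simpa using hmul (x⁻¹ * y) x

theorem AlmostInvariant.finite_edgeBoundary (hA : AlmostInvariant A) (hT : T.Finite) :
    (edgeBoundary (SimpleGraph.mulCayley T) A).Finite := by
  refine (hT.biUnion fun z _ ↦ (hA z).image fun y ↦ s(y, y * z)).subset ?_
  rintro ⟨x, y⟩ h
  obtain ⟨hadj, hxy⟩ := mk_mem_edgeBoundary.1 h
  obtain ⟨-, hz | hz⟩ := (SimpleGraph.mulCayley_adj T _ _).1 hadj
  · exact Set.mem_biUnion hz ⟨x, by simpa using hxy, by simp⟩
  · exact Set.mem_biUnion hz ⟨y, by simpa using fun h ↦ hxy h.symm, by simp [Sym2.eq_swap]⟩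

theorem almostInvariant_of_finite_edgeBoundary (hT : Subgroup.closure T = ⊤)
    (hA : (edgeBoundary (SimpleGraph.mulCayley T) A).Finite) : AlmostInvariant A := by
  refine almostInvariant_of_closure_eq_top hT fun z hz ↦
    (finite_vertices_edgeBoundary hA).subset fun y hy ↦ ?_
  refine ⟨s(y, y * z), mk_mem_edgeBoundary.2 ⟨?_, hy⟩, Sym2.mem_mk_left _ _⟩
  refine (SimpleGraph.mulCayley_adj T _ _).2 ⟨fun h ↦ hy ?_, by simp [hz]⟩
  rw [← h]

/-- The end of `G` to which the powers of an element `f` of infinite order converge. -/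
noncomputable def powEnd (f : G) : Ultrafilter G := (Filter.hyperfilter ℕ).map (f ^ ·)

theorem mem_powEnd_of_forall {f : G} (h : ∀ n : ℕ, f ^ (n + 1) ∈ A) : A ∈ powEnd f := by
  refine Filter.mem_hyperfilter_of_finite_compl ((Set.finite_singleton 0).subset fun n hn ↦ ?_)
  by_contra h0
  obtain ⟨m, rfl⟩ := Nat.exists_eq_succ_of_ne_zero h0
  exact hn (h m)

theorem AlmostInvariant.smul_mem_powEnd_iff (hA : AlmostInvariant A) {f h : G}
    (hh : ¬IsOfFinOrder h) (hfh : Commute f h) : f • A ∈ powEnd h ↔ A ∈ powEnd h := by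
  have hfin : {n : ℕ | ¬(h ^ n ∈ A ↔ h ^ n ∈ f • A)}.Finite := by
    refine ((hA f⁻¹).preimage (injective_pow_iff_not_isOfFinOrder.2 hh).injOn).subset fun n hn ↦ ?_
    rw [Set.mem_ofPred_eq, Set.mem_smul_set_iff_inv_smul_mem, smul_eq_mul,
      (hfh.inv_left.pow_right n).eq] at hn
    exact hn
  have hev := Filter.compl_mem_hyperfilter_of_finite hfin
  simp only [powEnd, Ultrafilter.mem_map]
  exact Filter.eventually_congr (Filter.mem_of_superset hev fun n hn ↦ (not_not.1 hn).symm)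

theorem mem_powEnd_iff_one_mem {f : G} (h : f • A = A) : A ∈ powEnd f ↔ 1 ∈ A := by
  have hpow (n : ℕ) : f ^ n ∈ A ↔ 1 ∈ A := by
    have hstab : f ^ n • A = A := pow_mem (show f ∈ MulAction.stabilizer G A from h) n
    nth_rw 1 [← hstab]
    simp [Set.mem_smul_set_iff_inv_smul_mem]
  have hset : (f ^ · : ℕ → G) ⁻¹' A = {_n | 1 ∈ A} := Set.ext hpow
  rw [powEnd, Ultrafilter.mem_map, hset]
  exact Filter.eventually_const

theorem IsNestedFamily.exists_ssubset_smul {S : Set (Set G)} (hS : IsNestedFamily G S)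
    (hA : A ∈ S) (hAI : AlmostInvariant A) {f : G} (hf : ¬IsOfFinOrder f)
    (hsep : Separates A (powEnd f) (powEnd f⁻¹)) : ∃ B ∈ S, B ⊂ f • B := by
  have hp := hAI.smul_mem_powEnd_iff hf (.refl f)
  have hq := hAI.smul_mem_powEnd_iff (isOfFinOrder_inv_iff.not.2 hf) (Commute.refl f).inv_right
  have hne : f • A ≠ A := fun h ↦ hsep <|
    (mem_powEnd_iff_one_mem h).trans (mem_powEnd_iff_one_mem (inv_smul_eq_iff.2 h.symm)).symm
  have hcorners : (A ∩ f • A).Nonempty ∧ (Aᶜ ∩ (f • A)ᶜ).Nonempty := by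
    have hmem {p : Ultrafilter G} (h : f • A ∈ p ↔ A ∈ p) (hAp : A ∈ p) :
        (A ∩ f • A).Nonempty := p.nonempty_of_mem (Filter.inter_mem hAp (h.2 hAp))
    have hcompl {p : Ultrafilter G} (h : f • A ∈ p ↔ A ∈ p) (hAp : A ∉ p) :
        (Aᶜ ∩ (f • A)ᶜ).Nonempty := p.nonempty_of_mem <| Filter.inter_mem
      (p.compl_mem_iff_notMem.2 hAp) (p.compl_mem_iff_notMem.2 (h.not.2 hAp))
    by_cases hAp : A ∈ powEnd f
    · exact ⟨hmem hp hAp, hcompl hq fun hAq ↦ hsep (iff_of_true hAp hAq)⟩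
    · exact ⟨hmem hq (by_contra fun hAq ↦ hsep (iff_of_false hAp hAq)), hcompl hp hAp⟩
  obtain ⟨x, hxA, hxB⟩ := hcorners.1
  obtain ⟨y, hyA, hyB⟩ := hcorners.2
  obtain h | h | h | h := hS.nested A hA (f • A) (hS.smul_mem f A hA)
  · exact ⟨A, hA, h.ssubset_of_ne hne.symm⟩
  · exact absurd hxB (h hxA)
  · exact absurd (h hyA) hyB
  · refine ⟨Aᶜ, hS.compl_mem A hA, ?_⟩
    rw [Set.smul_set_compl]
    exact compl_lt_compl_iff_lt.2 (h.ssubset_of_ne hne)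

theorem exists_retraction {θ : F →* G} (hθ : Function.Injective θ) [θ.range.FiniteIndex] :
    ∃ π : G → F, (∀ w y, π (θ w * y) = w * π y) ∧ π 1 = 1 ∧
      ∃ R : Set G, R.Finite ∧ ∀ y, ∃ r ∈ R, y = θ (π y) * r := by
  obtain ⟨R, hR, h1⟩ := θ.range.exists_isComplement_right 1
  let e := MonoidHom.ofInjective hθ
  refine ⟨fun y ↦ e.symm (hR.equiv y).1, fun w y ↦ ?_, ?_, R, hR.finite_right, fun y ↦ ?_⟩
  · have h : hR.equiv (θ w * y) = (e w * (hR.equiv y).1, (hR.equiv y).2) :=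
      hR.equiv_mul_left (e w) y
    change e.symm (hR.equiv (θ w * y)).1 = w * e.symm (hR.equiv y).1
    rw [h, map_mul, e.symm_apply_apply]
  · change e.symm (hR.equiv 1).1 = 1
    rw [hR.equiv_one (one_mem _) h1, ← map_one e.symm]
    rfl
  · have h : θ (e.symm (hR.equiv y).1) = (hR.equiv y).1 :=
      congrArg Subtype.val (e.apply_symm_apply _)
    refine ⟨(hR.equiv y).2, (hR.equiv y).2.2, ?_⟩
    change y = θ (e.symm (hR.equiv y).1) * (hR.equiv y).2
    rw [h, hR.equiv_fst_mul_equiv_snd]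

theorem AlmostInvariant.preimage {θ : F →* G} {π : G → F} (hπ : ∀ w y, π (θ w * y) = w * π y)
    {R : Set G} (hR : R.Finite) (hπR : ∀ y, ∃ r ∈ R, y = θ (π y) * r) {A : Set F}
    (hA : AlmostInvariant A) : AlmostInvariant (π ⁻¹' A) := by
  intro z
  refine (hR.biUnion fun r _ ↦
    (hA (π (r * z))).image (θ · * r)).subset fun y hy ↦ ?_
  obtain ⟨r, hr, hy_eq⟩ := hπR y
  refine Set.mem_biUnion hr ⟨π y, ?_, hy_eq.symm⟩
  have hz : π (y * z) = π y * π (r * z) := by rw [← hπ, ← mul_assoc, ← hy_eq]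
  simpa [hz] using hy

end AlmostInvariant

section FreeGroup

variable {α : Type*}

open scoped Classical in
/-- The elements of the free group whose reduced word begins with the inverse of the letter `ℓ`,
encoded through the last letter of the inverse word. -/
def beginningWithInv (ℓ : α × Bool) : Set (FreeGroup α) :=
  {x | x⁻¹.toWord.getLast? = some ℓ}

theorem almostInvariant_beginningWithInv [Finite α] (ℓ : α × Bool) :
    AlmostInvariant (beginningWithInv ℓ) := by
  classical
  refine almostInvariant_of_closure_eq_top (FreeGroup.closure_range_of α) ?_
  rintro _ ⟨a, rfl⟩
  have hshort : {x : FreeGroup α | x⁻¹.toWord.length ≤ 1}.Finite :=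
    (List.finite_length_le (α × Bool) 1).preimage
      (FreeGroup.toWord_injective.comp inv_injective).injOn
  refine hshort.subset fun x hx ↦ show _ ≤ 1 from Nat.le_of_not_lt fun hlong ↦ hx ?_
  have hmul : (x * of a)⁻¹.toWord = FreeGroup.reduce ((a, false) :: x⁻¹.toWord) := by
    rw [mul_inv_rev, FreeGroup.toWord_mul, FreeGroup.toWord_inv, FreeGroup.toWord_of]
    rfl
  simp only [beginningWithInv, Set.mem_ofPred_eq]
  convert Iff.rfl using 2
  rw [hmul, FreeGroup.reduce.cons, FreeGroup.reduce_toWord]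
  obtain ⟨b, c, l, hw⟩ : ∃ b c l, x⁻¹.toWord = b :: c :: l := by
    match h : x⁻¹.toWord with
    | [] | [_] => simp [h] at hlong
    | b :: c :: l => exact ⟨b, c, l, rfl⟩
  rw [hw]
  dsimp only
  split_ifs <;> simp only [List.getLast?_cons_cons]

open scoped Classical in
theorem toWord_mk_pow {R : List (α × Bool)}
    (hR : FreeGroup.IsCyclicallyReduced R) (n : ℕ) :
    (mk R ^ n).toWord = (List.replicate n R).flatten := by
  rw [FreeGroup.toWord_pow, FreeGroup.toWord_mk, hR.isReduced.reduce_eq,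
    (hR.flatten_replicate n).isReduced.reduce_eq]

theorem exists_beginningWithInv {R : List (α × Bool)} (hR : FreeGroup.IsCyclicallyReduced R)
    (hne : R ≠ []) : ∃ ℓ, ∀ n : ℕ, (mk R)⁻¹ ^ (n + 1) ∈ beginningWithInv ℓ ∧
      mk R ^ (n + 1) ∉ beginningWithInv ℓ := by
  classical
  have hlast (n : ℕ) : ((List.replicate (n + 1) R).flatten).getLast? = some (R.getLast hne) := by
    simp [List.replicate_succ', List.getLast?_append, List.getLast?_eq_getLast_of_ne_nil hne]
  have hhead (n : ℕ) : ((List.replicate (n + 1) R).flatten).head? = some (R.head hne) := by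
    simp [List.replicate_succ, List.head?_append, List.head?_eq_some_head hne]
  refine ⟨R.getLast hne, fun n ↦ ⟨?_, fun h ↦ ?_⟩⟩
  · rw [beginningWithInv, Set.mem_ofPred_eq, inv_pow, inv_inv, toWord_mk_pow hR, hlast]
  · rw [beginningWithInv, Set.mem_ofPred_eq, FreeGroup.toWord_inv, toWord_mk_pow hR,
      FreeGroup.invRev, List.getLast?_reverse, List.head?_map, hhead] at h
    have hsign := (FreeGroup.isCyclicallyReduced_iff.1 hR).2 _ (List.getLast_mem_getLast? hne) _
      (List.head_mem_head? hne)
    simp only [Option.map_some, Option.some.injEq] at h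
    simp [← h] at hsign

end FreeGroup

section Tree

open scoped Pointwise

/-- Cutting the Cayley graph along the minimal cuts of bounded size that separate two ends. -/
theorem exists_tree_of_forall_separates {G : Type u} [Group G] [Group.FG G] {ι : Type*} [Finite ι]
    {A : ι → Set G} (hA : ∀ i, AlmostInvariant (A i)) :
    ∃ (V : Type u) (_ : MulAction G V) (E : V → V → Prop), IsInvariantOrientedTree G E ∧
      (∀ g : G, IsOfFinOrder g → ∃ v : V, g • v = v) ∧
      ∀ f : G, ¬IsOfFinOrder f → (∃ i, Separates (A i) (powEnd f) (powEnd f⁻¹)) →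
        ∀ v : V, f • v ≠ v := by
  obtain ⟨T, hT⟩ := Group.fg_def.1 ‹_›
  let X := SimpleGraph.mulCayley (T : Set G)
  have hfin (i : ι) : (edgeBoundary X (A i)).Finite := (hA i).finite_edgeBoundary T.finite_toSet
  obtain ⟨k, hk⟩ := (Set.finite_range fun i ↦ (edgeBoundary X (A i)).ncard).bddAbove
  have hX (g : G) {x y : G} (h : X.Adj x y) : X.Adj (g • x) (g • y) :=
    SimpleGraph.mulCayley_adj_mul_iff_right.2 h
  have hS := isNestedFamily_setOf_isOptimalCut hX (preconnected_mulCayley hT) k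
  obtain ⟨V, hV, E, hE, htor, hhyp⟩ := hS.exists_tree
  refine ⟨V, hV, E, hE, htor, fun f hf ⟨i, hi⟩ ↦ ?_⟩
  obtain ⟨B, hB⟩ := exists_isOptimalCut (hfin i) (hk ⟨i, rfl⟩) hi
  obtain ⟨C, hCS, hC⟩ := hS.exists_ssubset_smul ⟨_, _, hB⟩
    (almostInvariant_of_finite_edgeBoundary hT hB.finite) hf hB.separates
  exact hhyp f C hCS hC

theorem exists_tree_of_finiteIndex_range {α : Type*} {G : Type u} [Group G] [Finite α]
    [Group.FG G] {θ : FreeGroup α →* G} (hθ : Function.Injective θ) [θ.range.FiniteIndex] :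
    ∃ (V : Type u) (_ : MulAction G V) (E : V → V → Prop), IsInvariantOrientedTree G E ∧
      (∀ g : G, IsOfFinOrder g → ∃ v : V, g • v = v) ∧ ∀ w ≠ 1, ∀ v : V, θ w • v ≠ v := by
  obtain ⟨π, hπ, hπ1, R, hR, hπR⟩ := exists_retraction hθ
  obtain ⟨V, hV, E, hE, htor, hhyp⟩ := exists_tree_of_forall_separates
    fun ℓ : α × Bool ↦ (almostInvariant_beginningWithInv ℓ).preimage hπ hR hπR
  refine ⟨V, hV, E, hE, htor, fun x hx v hv ↦ ?_⟩
  obtain ⟨c, w, hw, hne, hxw⟩ := exists_conj_eq_mk_isCyclicallyReduced hx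
  have hπpow (y : FreeGroup α) (n : ℕ) : π (θ y ^ n) = y ^ n := by
    simpa [hπ1] using hπ (y ^ n) 1
  have hsep : ∃ ℓ,
      Separates (π ⁻¹' beginningWithInv ℓ) (powEnd (θ (mk w))) (powEnd (θ (mk w))⁻¹) := by
    obtain ⟨ℓ, hℓ⟩ := exists_beginningWithInv hw hne
    refine ⟨ℓ, fun h ↦ ?_⟩
    have hneg : (π ⁻¹' beginningWithInv ℓ)ᶜ ∈ powEnd (θ (mk w)) :=
      mem_powEnd_of_forall fun n ↦ by simpa [hπpow] using (hℓ n).2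
    have hpos : π ⁻¹' beginningWithInv ℓ ∈ powEnd (θ (mk w))⁻¹ :=
      mem_powEnd_of_forall fun n ↦ by simpa [← map_inv, hπpow] using (hℓ n).1
    exact (Ultrafilter.compl_mem_iff_notMem.1 hneg) (h.2 hpos)
  have hord : ¬IsOfFinOrder (θ (mk w)) := by
    rw [hθ.isOfFinOrder_iff, isOfFinOrder_iff_eq_one, ← hxw]
    simpa [mul_assoc, inv_mul_eq_one] using hx
  refine hhyp _ hord hsep ((θ c)⁻¹ • v) ?_
  rw [← hxw, map_mul, map_mul, map_inv, mul_smul, mul_smul, smul_inv_smul, hv]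

end Tree

section FiniteOrder

theorem finiteIndex_range_conj_comp {F G : Type*} [Group F] [Group G] (θ : F →* G)
    [θ.range.FiniteIndex] (r : G) : ((MulAut.conj r).toMonoidHom.comp θ).range.FiniteIndex := by
  have : (MulAut.conj r).toMonoidHom.range.FiniteIndex := by
    rw [MonoidHom.range_eq_top.2 (MulAut.conj r).surjective]
    infer_instance
  rw [MonoidHom.range_comp]
  exact finiteIndex_map _ _

theorem ConjSeparable.of_forall_comap_conj {F G : Type*} [Group F] [Group G] {θ : F →* G}
    [θ.range.FiniteIndex] {H : Subgroup G} {g : F}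
    (h : ∀ r : G, ConjSeparable (H.comap ((MulAut.conj r).toMonoidHom.comp θ)) g) :
    ConjSeparable H (θ g) := by
  have := finiteIndex_range_conj_comp θ
  choose K _ hHK hK using h
  choose M hM hHM hMK using fun r ↦ exists_finiteIndex_comap_le (hHK r)
  refine ⟨⨅ q : G ⧸ θ.range, M q.out, Subgroup.finiteIndex_iInf fun q ↦ hM q.out,
    le_iInf fun q ↦ hHM q.out, fun a ha ↦ ?_⟩
  obtain ⟨⟨_, b, rfl⟩, hb⟩ := QuotientGroup.mk_out_eq_mul θ.range a⁻¹
  refine hK _ b (hMK ((a⁻¹ : G) : G ⧸ θ.range).out ?_)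
  have hconj : (MulAut.conj ((a⁻¹ : G) : G ⧸ θ.range).out) (θ (b⁻¹ * g * b)) = a⁻¹ * θ g * a := by
    rw [hb]
    simp [mul_assoc]
  exact Subgroup.mem_comap.2 (hconj ▸ Subgroup.mem_iInf.1 ha _)

variable {G : Type u} [Group G] {α : Type u} {θ : FreeGroup α →* G}

theorem conjSeparable_of_isOfFinOrder [Finite α] [Group.FG G] (hθ : Function.Injective θ)
    [θ.range.Normal] [θ.range.FiniteIndex] {H : Subgroup G} (hH : H.FG) {g : G}
    (hg : IsOfFinOrder g) (hgH : ∀ a, a⁻¹ * g * a ∉ H) : ConjSeparable H g := by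
  obtain ⟨V, _, E, hE, hfix, hfree⟩ := exists_tree_of_finiteIndex_range hθ
  obtain ⟨v, hv⟩ := hfix g hg
  let p := QuotientGroup.mk' θ.range
  let G₁ := (Subgroup.zpowers (p g)).comap p
  let ρ : G₁ →* Subgroup.zpowers (p g) := p.subgroupComap _
  let g₁ : G₁ := ⟨g, Subgroup.mem_zpowers (p g)⟩
  have hρ (u : V) : Set.InjOn ρ (MulAction.stabilizer G₁ u) := by
    intro x hx y hy hxy
    obtain ⟨w, hw⟩ := QuotientGroup.eq.1 (congrArg Subtype.val hxy)
    have hwu : θ w • u = u := by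
      rw [hw]
      exact mul_mem (inv_mem hx) hy
    have hw1 : w = 1 := by_contra fun h ↦ hfree w h u hwu
    exact Subtype.ext (inv_mul_eq_one.1 (by rw [← hw, hw1, map_one]))
  have hgen : Subgroup.zpowers (ρ g₁) = ⊤ := by
    refine (Subgroup.eq_top_iff' _).2 fun ⟨_, n, hn⟩ ↦ ⟨n, Subtype.ext ?_⟩
    exact hn
  have : G₁.FiniteIndex := finiteIndex_comap p _
  have : G₁.subtype.range.FiniteIndex := by rwa [G₁.range_subtype]
  refine ConjSeparable.of_forall_comap_conj (θ := G₁.subtype) (g := g₁) fun r ↦ ?_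
  have := finiteIndex_range_conj_comp G₁.subtype r
  open IsMulCommutative in
  refine conjSeparable_of_smul_eq (G := G₁) (ρ := ρ) (g := g₁)
    ⟨fun x ↦ hE.smul x, hE.asymm, hE.isTree⟩ hρ
    (fg_comap_of_injective ((MulAut.conj r).injective.comp G₁.subtype_injective) hH) hgen hv
    fun a ha ↦ hgH (a * r⁻¹) ?_
  simpa [Subgroup.mem_comap, mul_assoc] using ha

end FiniteOrder

section VirtuallyFree

theorem finite_of_fg_freeGroup {α : Type*} [Group.FG (FreeGroup α)] : Finite α := by
  obtain ⟨T, hT⟩ := Group.fg_def.1 ‹Group.FG (FreeGroup α)›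
  have hres : Function.Injective fun (φ : FreeGroup α →* Multiplicative (ZMod 2)) (t : T) ↦ φ t :=
    fun φ ψ h ↦ MonoidHom.eq_of_eqOn_dense hT fun t ht ↦ congrFun h ⟨t, ht⟩
  have : Finite (FreeGroup α →* Multiplicative (ZMod 2)) := .of_injective _ hres
  have : Finite (α → Multiplicative (ZMod 2)) := .of_equiv _ FreeGroup.lift.symm
  classical
  refine .of_injective (fun a ↦ Pi.mulSingle a (.ofAdd 1) : α → α → Multiplicative (ZMod 2))
    fun a b h ↦ ?_
  by_contra hab
  simpa [hab] using congrFun h a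

theorem exists_injective_freeGroup {G : Type u} [Group G] [Group.FG G] {F : Subgroup G}
    [F.FiniteIndex] [IsFreeGroup F] :
    ∃ (α : Type u) (_ : Finite α) (θ : FreeGroup α →* G), Function.Injective θ ∧
      θ.range.Normal ∧ θ.range.FiniteIndex := by
  have : IsFreeGroup F.normalCore :=
    IsFreeGroup.ofMulEquiv (Subgroup.subgroupOfEquivOfLe F.normalCore_le)
  let e := IsFreeGroup.toFreeGroup F.normalCore
  have : Group.FG (FreeGroup (IsFreeGroup.Generators F.normalCore)) :=
    Group.fg_of_surjective (f := e.toMonoidHom) e.surjective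
  let θ := F.normalCore.subtype.comp e.symm.toMonoidHom
  have hθ : θ.range = F.normalCore := by
    rw [MonoidHom.range_comp, MonoidHom.range_eq_top.2 e.symm.surjective, ← MonoidHom.range_eq_map,
      Subgroup.range_subtype]
  refine ⟨_, finite_of_fg_freeGroup, θ, F.normalCore.subtype_injective.comp e.symm.injective,
    ?_, ?_⟩
    <;> rw [hθ] <;> infer_instance

end VirtuallyFree

/-- Ribes–Zalesskii: finitely generated subgroups of finitely generated virtually
free groups are conjugacy distinguished: if `g` is not conjugate into `H`, some
finite quotient of `G` separates `g` from the conjugates of `H`. -/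
theorem fg_subgroup_conjugacy_distinguished (G : Type u) [Group G]
    (hfg : Group.FG G)
    (hvf : ∃ F : Subgroup G, F.FiniteIndex ∧ IsFreeGroup F)
    (H : Subgroup G) (hH : H.FG) (g : G)
    (hg : ¬ ∃ (k : G), ∃ x ∈ H, g = k⁻¹ * x * k) :
    ∃ (Q : Type u) (_ : Group Q) (_ : Finite Q) (q : G →* Q), Function.Surjective q ∧
      ¬ ∃ (k : Q), ∃ x ∈ H.map q, q g = k⁻¹ * x * k := by
  obtain ⟨F, _, _⟩ := hvf
  obtain ⟨α, _, θ, hθ, _, _⟩ := exists_injective_freeGroup (F := F)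
  have hgH (a : G) : a⁻¹ * g * a ∉ H := fun ha ↦ hg ⟨a⁻¹, _, ha, by group⟩
  apply ConjSeparable.exists_finite_quotient
  by_cases hord : IsOfFinOrder g
  · exact conjSeparable_of_isOfFinOrder hθ hH hord hgH
  · exact conjSeparable_of_not_isOfFinOrder hθ hH hord hgH
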